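/- Let A be an m×k integer matrix with k > m, of maximum rank m over ℚ, irredundant, and satisfying the strong column condition, and assume q−1+h_B−m ≥ 1 for every B ⊆ {1,…,k} with |B| = q ≥ 2. Then for every β > 0 there exist constants C = C(A,β) and n₀ = n₀(A,β) such that for every n ≥ n₀ and every integer t ≥ C·n^{1−1/m_A}, the number of subsets F ⊆ {1,…,n} with |F| = t containing no x ∈ F^k with pairwise distinct coordinates satisfying Ax = 0 is at most C(⌊βn⌋, t). -/

import Mathlib

open Finset

attribute [local instance] Classical.propDecidable

/-- `h_B`: the rank over `ℚ` of the matrix obtained from `A` by deleting the columns indexed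
by `B`. -/
noncomputable def hRank {m k : ℕ} (A : Matrix (Fin m) (Fin k) ℤ) (B : Finset (Fin k)) : ℕ :=
  ((A.map (Int.cast : ℤ → ℚ)).submatrix id (fun j : {j : Fin k // j ∉ B} => (j : Fin k))).rank

/-- The Rödl–Ruciński parameter `m_A`. -/
noncomputable def mParam {m k : ℕ} (A : Matrix (Fin m) (Fin k) ℤ) : ℝ :=
  sSup {x : ℝ | ∃ B : Finset (Fin k), 2 ≤ B.card ∧
    x = ((B.card : ℝ) - 1) / ((B.card : ℝ) - 1 + (hRank A B : ℝ) - (m : ℝ))}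

/-! The solutions of `Ax = 0` with distinct coordinates are the edges of a `k`-uniform hypergraph on
`{1, …, n}`, whose independent sets are the solution-free sets.

The hypergraph is supersaturated: every `F` with `#F ≥ δ n` contains at least `c n ^ (k - m)`
solutions. By the column condition the constant vectors lie in the lattice `ker A`. Hence, for
vectors `g s` in a box of this lattice and an integer `a`, every combinatorial line `ℓ` over the
alphabet of coordinates gives the solution `j ↦ a + ∑ s, g s (ℓ j s)`, and the density Hales–Jewett
theorem puts such a line inside `F` for a positive proportion of the pairs `(a, g)`. Density
Hales–Jewett itself is proved by induction on the alphabet: a line-free set of nearly extremal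
density correlates with an intersection of insensitive sets, and this can be almost partitioned
into subspaces, on one of which the density would have to increase.

The parameter `m_A` is the exponent for which `p = n ^ (-1 / m_A)` makes the number of solutions
through a set `X` at most `D p ^ (#X - 1)`, where `D` is of order `n ^ (k - m - 1)`. This is the
hypothesis of the hypergraph container method, by which each solution-free set has a fingerprint of
`O(p n)` elements that determines a set of at most `β n / 65` elements containing the rest. The
binomial sum over the fingerprints is at most `C(⌊β n⌋, t)` as soon as `t` is a large multiple of
`p n`. -/

open scoped BigOperators
open Combinatorics

section Density

variable {X Y Z : Type*} [Fintype X] [Fintype Y]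

/-- The density of a set in a finite type, that is, its uniform probability. -/
noncomputable def density (s : Set X) : ℝ := 𝔼 x, s.indicator 1 x

theorem expect_le_density {s : Set X} {f : X → ℝ} (h : ∀ x, f x ≤ s.indicator 1 x) :
    𝔼 x, f x ≤ density s :=
  Finset.expect_le_expect fun x _ => h x

theorem density_nonneg (s : Set X) : 0 ≤ density s :=
  Finset.expect_nonneg fun _ _ => Set.indicator_nonneg (fun _ _ => zero_le_one) _

theorem card_mul_density (s : Set X) :
    Fintype.card X * density s = ∑ x, s.indicator (1 : X → ℝ) x :=
  Fintype.card_mul_expect _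

theorem density_eq_ncard_div_card (s : Set X) : density s = s.ncard / Fintype.card X := by
  rw [density, Fintype.expect_eq_sum_div_card, Set.ncard_eq_toFinset_card']
  simp only [Set.indicator_apply, Pi.one_apply, Finset.sum_boole]
  congr 3
  ext
  simp

theorem density_le_one (s : Set X) : density s ≤ 1 := by
  rw [density_eq_ncard_div_card, ← Nat.card_eq_fintype_card]
  exact div_le_one_of_le₀ (mod_cast Set.ncard_le_card s) (Nat.cast_nonneg _)

theorem density_inter_add_density_diff (s t : Set X) :
    density (s ∩ t) + density (s \ t) = density s := by
  simp only [density, ← Finset.expect_add_distrib]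
  refine Finset.expect_congr rfl fun x _ => ?_
  by_cases hs : x ∈ s <;> by_cases ht : x ∈ t <;> simp [hs, ht]

theorem density_compl [Nonempty X] (s : Set X) : density sᶜ = 1 - density s := by
  have huniv : density (Set.univ : Set X) = 1 := by simp [density]
  rw [← huniv, ← density_inter_add_density_diff Set.univ s, Set.univ_inter,
    Set.compl_eq_univ_sdiff, add_sub_cancel_left]

theorem density_preimage_equiv (e : X ≃ Y) (s : Set Y) : density (e ⁻¹' s) = density s :=
  Fintype.expect_equiv e _ _ fun _ => rfl

theorem nonempty_of_density_pos {s : Set X} (h : 0 < density s) : s.Nonempty := by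
  by_contra! hs
  simp [hs, density] at h

theorem inv_card_le_density {s : Set X} (h : s.Nonempty) : (Fintype.card X : ℝ)⁻¹ ≤ density s := by
  rw [density_eq_ncard_div_card, ← one_div]
  gcongr
  exact mod_cast (Set.ncard_pos s.toFinite).2 h

theorem expect_density_comm (P : X → Y → Prop) :
    𝔼 y, density {x | P x y} = 𝔼 x, density {y | P x y} :=
  Finset.expect_comm _ _ _

theorem mul_density_le_expect {s : Set X} {f : X → ℝ} {c : ℝ} (hf : ∀ x, 0 ≤ f x)
    (h : ∀ x ∈ s, c ≤ f x) : c * density s ≤ 𝔼 x, f x := by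
  rw [density, Finset.mul_expect]
  refine Finset.expect_le_expect fun x _ => ?_
  by_cases hx : x ∈ s
  · simpa [hx] using h x hx
  · simpa [hx] using hf x

theorem half_le_density_setOf_half_le [Nonempty X] {f : X → ℝ} {δ : ℝ} (hδ : 0 ≤ δ)
    (hf : ∀ x, f x ≤ 1) (h : δ ≤ 𝔼 x, f x) : δ / 2 ≤ density {x | δ / 2 ≤ f x} := by
  have hle : 𝔼 x, (f x - δ / 2) ≤ density {x | δ / 2 ≤ f x} := by
    refine expect_le_density fun x => ?_
    by_cases hx : δ / 2 ≤ f x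
    · simpa [hx] using (hf x).trans (by linarith)
    · simpa [hx] using le_of_not_ge hx
  rw [Finset.expect_sub_distrib, Fintype.expect_const] at hle
  linarith

theorem exists_density_le_card_mul [Finite Z] [Nonempty Z] {s : Set X} {t : Z → Set X}
    (h : s ⊆ ⋃ z, t z) : ∃ z, density s ≤ Nat.card Z * density (t z) := by
  have := Fintype.ofFinite Z
  have hunion : density s ≤ ∑ z, density (t z) := by
    simp only [density]
    rw [← Finset.expect_sum_comm]
    refine Finset.expect_le_expect fun x _ => ?_
    by_cases hx : x ∈ s
    · obtain ⟨z, hz⟩ := Set.mem_iUnion.1 (h hx)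
      calc s.indicator 1 x = (t z).indicator 1 x := by simp [hx, hz]
        _ ≤ ∑ z, (t z).indicator 1 x := Finset.single_le_sum
          (fun z _ => Set.indicator_nonneg (fun _ _ => zero_le_one) x) (mem_univ z)
    · rw [Set.indicator_of_notMem hx]
      exact Finset.sum_nonneg fun z _ => Set.indicator_nonneg (fun _ _ => zero_le_one) x
  obtain ⟨z, -, hz⟩ := Finset.exists_le_of_sum_le (s := univ) (f := fun _ => density s / Nat.card Z)
    (g := fun z => density (t z)) univ_nonempty (by
      rw [sum_const, card_univ, nsmul_eq_mul, Nat.card_eq_fintype_card]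
      exact (mul_div_cancel₀ _ (by positivity)).trans_le hunion)
  exact ⟨z, (div_le_iff₀' (mod_cast Nat.card_pos)).1 hz⟩

end Density

section Subspaces

variable {α β ι κ l η : Type*}

/-- The composition of combinatorial subspaces: a subspace of a subspace. -/
def compSubspace (σ : Subspace κ α ι) (τ : Subspace η α κ) : Subspace η α ι where
  idxFun i := (σ.idxFun i).elim Sum.inl τ.idxFun
  proper e := by
    obtain ⟨j, hj⟩ := τ.proper e
    obtain ⟨i, hi⟩ := σ.proper j
    exact ⟨i, by simp [hi, hj]⟩

@[simp]
theorem compSubspace_apply (σ : Subspace κ α ι) (τ : Subspace η α κ) (x : η → α) :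
    compSubspace σ τ x = σ (τ x) := by
  funext i
  simp only [Subspace.apply_def, compSubspace]
  cases σ.idxFun i <;> simp [Subspace.apply_def]

/-- The subspace obtained by applying a map of alphabets to the constant letters. With `f = some`
it acts on variable words over `α`, that is, on words over `Option α` with `none` the variable. -/
def mapSubspace (f : α → β) (σ : Subspace η α ι) : Subspace η β ι where
  idxFun i := (σ.idxFun i).map f id
  proper e := (σ.proper e).imp fun i hi => by simp [hi]

theorem mapSubspace_apply (f : α → β) (σ : Subspace η α ι) (x : η → β) (i : ι) :
    mapSubspace f σ x i = (σ.idxFun i).elim f x := by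
  simp only [Subspace.apply_def, mapSubspace]
  cases σ.idxFun i <;> simp

theorem mapSubspace_apply_comp (f : α → β) (σ : Subspace η α ι) (x : η → α) :
    mapSubspace f σ (f ∘ x) = f ∘ σ x := by
  funext i
  rw [mapSubspace_apply]
  simp only [Function.comp_apply, Subspace.apply_def]
  cases σ.idxFun i <;> simp

theorem mapSubspace_compSubspace (f : α → β) (σ : Subspace κ α ι) (τ : Subspace η α κ) :
    mapSubspace f (compSubspace σ τ) = compSubspace (mapSubspace f σ) (mapSubspace f τ) := by
  ext i : 2
  simp only [mapSubspace, compSubspace]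
  cases σ.idxFun i <;> simp

theorem subspace_injective (σ : Subspace η α ι) : Function.Injective σ := by
  intro x y hxy
  funext e
  obtain ⟨i, hi⟩ := σ.proper e
  simpa only [Subspace.apply_inr hi] using congrFun hxy i

/-- The line of a subspace spanned by a line of its parameter space. -/
def lineOfSubspace (σ : Subspace κ α ι) (L : Line α κ) : Line α ι where
  idxFun := mapSubspace some σ L.idxFun
  proper := by
    obtain ⟨j, hj⟩ := L.proper
    obtain ⟨i, hi⟩ := σ.proper j
    exact ⟨i, by simp [mapSubspace_apply, hi, hj]⟩

theorem lineOfSubspace_apply (σ : Subspace κ α ι) (L : Line α κ) (a : α) :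
    lineOfSubspace σ L a = σ (L a) := by
  funext i
  simp only [Line.coe_apply, lineOfSubspace]
  rw [mapSubspace_apply, Subspace.apply_def]
  cases σ.idxFun i <;> simp

/-- The word with first block `x` and second block `y`, for a splitting `e` of the coordinates
into two blocks. -/
def glue (e : ι ≃ κ ⊕ l) (x : κ → α) (y : l → α) : ι → α := Sum.elim x y ∘ e

/-- The subspace of all words whose second block is `y`. -/
def leftSubspace (e : ι ≃ κ ⊕ l) (y : l → α) : Subspace κ α ι where
  idxFun i := (e i).elim Sum.inr (Sum.inl ∘ y)
  proper j := ⟨e.symm (Sum.inl j), by simp⟩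

theorem leftSubspace_apply (e : ι ≃ κ ⊕ l) (x : κ → α) (y : l → α) :
    leftSubspace e y x = glue e x y := by
  funext i
  simp only [Subspace.apply_def, leftSubspace, glue, Function.comp_apply]
  cases e i <;> simp

theorem mapSubspace_leftSubspace_apply (f : α → β) (e : ι ≃ κ ⊕ l) (x : κ → β) (y : l → α) :
    mapSubspace f (leftSubspace e y) x = glue e x (f ∘ y) := by
  funext i
  simp only [mapSubspace_apply, leftSubspace, glue, Function.comp_apply]
  cases e i <;> simp

/-- The subspace of all words whose first block is `x`. -/
def rightSubspace (e : ι ≃ κ ⊕ l) (x : κ → α) : Subspace l α ι where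
  idxFun i := (e i).elim (Sum.inl ∘ x) Sum.inr
  proper j := ⟨e.symm (Sum.inr j), by simp⟩

theorem rightSubspace_apply (e : ι ≃ κ ⊕ l) (x : κ → α) (y : l → α) :
    rightSubspace e x y = glue e x y := by
  funext i
  simp only [Subspace.apply_def, rightSubspace, glue, Function.comp_apply]
  cases e i <;> simp

/-- The product of a line, parametrised by coordinate `0`, with a `d`-dimensional subspace,
parametrised by the remaining coordinates. -/
def consSubspace {d : ℕ} (e : ι ≃ κ ⊕ l) (L : Line α κ) (τ : Subspace (Fin d) α l) :
    Subspace (Fin (d + 1)) α ι where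
  idxFun i := (e i).elim (fun j => (L.idxFun j).elim (Sum.inr 0) Sum.inl)
    (fun j => (τ.idxFun j).map id Fin.succ)
  proper t := by
    induction t using Fin.cases with
    | zero =>
      obtain ⟨j, hj⟩ := L.proper
      exact ⟨e.symm (Sum.inl j), by simp [hj]⟩
    | succ t =>
      obtain ⟨j, hj⟩ := τ.proper t
      exact ⟨e.symm (Sum.inr j), by simp [hj]⟩

theorem consSubspace_apply {d : ℕ} (e : ι ≃ κ ⊕ l) (L : Line α κ) (τ : Subspace (Fin d) α l)
    (x : Fin (d + 1) → α) : consSubspace e L τ x = glue e (L (x 0)) (τ (Fin.tail x)) := by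
  funext i
  simp only [Subspace.apply_def, consSubspace, glue, Function.comp_apply]
  rcases e i with j | j
  · cases h : L.idxFun j <;> simp [h]
  · cases h : τ.idxFun j <;> simp [Subspace.apply_def, h, Fin.tail]

theorem mapSubspace_consSubspace_apply {d : ℕ} (f : α → β) (e : ι ≃ κ ⊕ l) (L : Line α κ)
    (τ : Subspace (Fin d) α l) (x : Fin (d + 1) → β) :
    mapSubspace f (consSubspace e L τ) x =
      glue e (L.map f (x 0)) (mapSubspace f τ (Fin.tail x)) := by
  funext i
  simp only [mapSubspace_apply, consSubspace, glue, Function.comp_apply]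
  rcases e i with j | j
  · cases h : L.idxFun j <;> simp [Line.map, h]
  · cases h : τ.idxFun j <;> simp [mapSubspace_apply, h, Fin.tail]

theorem expect_glue [Fintype α] [Fintype ι] [Fintype κ] [Fintype l] (e : ι ≃ κ ⊕ l)
    (f : (ι → α) → ℝ) : 𝔼 w, f w = 𝔼 y : l → α, 𝔼 x : κ → α, f (glue e x y) := by
  rw [← Finset.expect_product' univ univ, univ_product_univ]
  exact (Fintype.expect_equiv (((Equiv.prodComm _ _).trans
    (Equiv.sumArrowEquivProdArrow κ l α).symm).trans (Equiv.arrowCongr e.symm (Equiv.refl α)))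
    _ _ fun _ => rfl).symm

theorem density_eq_expect_glue [Fintype α] [Fintype ι] [Fintype κ] [Fintype l] (e : ι ≃ κ ⊕ l)
    (s : Set (ι → α)) : density s = 𝔼 y : l → α, density {x : κ → α | glue e x y ∈ s} :=
  expect_glue e _

theorem density_eq_expect_glue' [Fintype α] [Fintype ι] [Fintype κ] [Fintype l] (e : ι ≃ κ ⊕ l)
    (s : Set (ι → α)) : density s = 𝔼 x : κ → α, density {y : l → α | glue e x y ∈ s} :=
  (density_eq_expect_glue e s).trans (expect_density_comm fun x y => glue e x y ∈ s)

theorem exists_equiv_sum [Fintype ι] [Fintype κ] (h : Fintype.card κ ≤ Fintype.card ι) :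
    ∃ (l : Type) (_ : Fintype l), Fintype.card l = Fintype.card ι - Fintype.card κ ∧
      Nonempty (ι ≃ κ ⊕ l) :=
  ⟨Fin (Fintype.card ι - Fintype.card κ), inferInstance, by simp,
    Fintype.card_eq.1 (by simp [h])⟩

end Subspaces

section GrahamRothschild

universe u

variable {α ι κ K : Type*}

/-- A colouring of variable words (words over `Option α`, with `none` the variable) is prefix
determined if it ignores all letters after the first occurrence of the variable. -/
def PrefixDetermined [LE ι] (χ : (ι → Option α) → K) : Prop :=
  ∀ z z' : ι → Option α, ∀ j, z j = none → (∀ i ≤ j, z i = z' i) → χ z = χ z'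

/-- The subspace over `α` in which the occurrences of the constant `none` in `σ` become a further
wildcard, which is also displayed on one further coordinate. -/
def freeNone (σ : Subspace κ (Option α) ι) : Subspace (Unit ⊕ κ) α (Unit ⊕ ι) where
  idxFun := Sum.elim (fun _ => Sum.inr (Sum.inl ())) fun i =>
    (σ.idxFun i).elim (fun b => b.elim (Sum.inr (Sum.inl ())) Sum.inl) (Sum.inr ∘ Sum.inr)
  proper
    | Sum.inl () => ⟨Sum.inl (), rfl⟩
    | Sum.inr e => (σ.proper e).elim fun i hi => ⟨Sum.inr i, by simp [hi]⟩

theorem mapSubspace_freeNone_apply (σ : Subspace κ (Option α) ι) (y : κ → Option α) :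
    mapSubspace some (freeNone σ) (glue (Equiv.refl _) (fun _ => none) y) =
      glue (Equiv.refl _) (fun _ => none) (σ y) := by
  funext i
  rw [mapSubspace_apply]
  rcases i with u | i
  · rfl
  · rcases h : σ.idxFun i with (_ | b) | e <;> simp [freeNone, glue, Subspace.apply_def, h]

theorem exists_prefixDetermined_mapSubspace (α : Type u) [Finite α] (m : ℕ) (K : Type u)
    [Finite K] :
    ∃ (ι : Type) (_ : Fintype ι), ∀ χ : (ι → Option α) → K, ∃ σ : Subspace (Fin m) α ι,
      PrefixDetermined fun z => χ (mapSubspace some σ z) := by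
  induction m generalizing K with
  | zero => exact ⟨Empty, inferInstance, fun χ => ⟨⟨Empty.elim, fun e => e.elim0⟩,
      fun z z' j => j.elim0⟩⟩
  | succ m ih =>
    obtain ⟨R, _, hR⟩ := ih (α → K)
    obtain ⟨ι, _, hι⟩ := Subspace.exists_mono_in_high_dimension (Option α) K R
    refine ⟨Unit ⊕ ι, inferInstance, fun χ => ?_⟩
    obtain ⟨τ, c, hτ⟩ := hι fun y => χ (glue (Equiv.refl _) (fun _ => none) y)
    obtain ⟨ρ, hρ⟩ := hR fun y a =>
      χ (mapSubspace some (freeNone τ) (glue (Equiv.refl _) (fun _ => some a) y))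
    refine ⟨compSubspace (freeNone τ) (consSubspace (Equiv.refl _) (Line.diagonal α Unit) ρ),
      fun z z' j hz hzz' => ?_⟩
    have happly (z : Fin (m + 1) → Option α) : mapSubspace some
        (consSubspace (Equiv.refl _) (Line.diagonal α Unit) ρ) z =
          glue (Equiv.refl _) (fun _ => z 0) (mapSubspace some ρ (Fin.tail z)) :=
      mapSubspace_consSubspace_apply _ _ _ _ _
    simp only [mapSubspace_compSubspace, compSubspace_apply, happly, ← hzz' 0 (Fin.zero_le j)]
    cases h0 : z 0 with
    | none => simp only [mapSubspace_freeNone_apply, hτ]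
    | some a =>
      obtain ⟨j, rfl⟩ := Fin.exists_succ_eq.2 (show j ≠ 0 by rintro rfl; simp [hz] at h0)
      exact congrFun (hρ (Fin.tail z) (Fin.tail z') j hz fun i hi =>
        hzz' i.succ (Fin.succ_le_succ_iff.2 hi)) a

theorem exists_mono_by_first_none (α : Type*) [Finite α] [Nonempty α] (K : Type*) [Finite K]
    (m : ℕ) : ∃ M : ℕ, ∀ χ : (Fin M → Option α) → K, PrefixDetermined χ →
      ∃ σ : Subspace (Fin m) α (Fin M), ∃ c : Fin m → K, ∀ z : Fin m → Option α, ∀ e,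
        z e = none → (∀ i < e, z i ≠ none) → χ (mapSubspace some σ z) = c e := by
  induction m with
  | zero => exact ⟨0, fun χ _ => ⟨⟨fun i => i.elim0, fun e => e.elim0⟩, fun e => e.elim0,
      fun z e => e.elim0⟩⟩
  | succ m ih =>
    obtain ⟨R, hR⟩ := ih
    obtain ⟨n, hn⟩ := Subspace.exists_mono_in_high_dimension_fin α ((Fin R → Option α) → K) Unit
    refine ⟨n + R, fun χ hχ => ?_⟩
    let e : Fin (n + R) ≃ Fin n ⊕ Fin R := finSumFinEquiv.symm
    obtain ⟨ℓ, c₀, hℓ⟩ := hn fun x y => χ (glue e (some ∘ x) y)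
    let L := lineOfSubspace ℓ (Line.diagonal α Unit)
    have hL (a : α) (y : Fin R → Option α) : χ (glue e (some ∘ L a) y) = c₀ y := by
      rw [lineOfSubspace_apply]
      exact congrFun (hℓ _) y
    have hc₀ : PrefixDetermined c₀ := fun z z' j hz hzz' => by
      rw [← hL (Classical.arbitrary α), ← hL (Classical.arbitrary α)]
      refine hχ _ _ (Fin.natAdd n j) (by simpa [glue, e] using hz) fun i hi => ?_
      induction i using Fin.addCases with
      | left i => simp [glue, e]
      | right i => simpa [glue, e] using hzz' i (by simpa using hi)
    obtain ⟨τ, c, hc⟩ := hR c₀ hc₀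
    obtain ⟨j, hj⟩ := L.proper
    refine ⟨consSubspace e L τ, Fin.cons (χ (glue e L.idxFun fun _ => none)) c,
      fun z t hz hlt => ?_⟩
    rw [mapSubspace_consSubspace_apply]
    induction t using Fin.cases with
    | zero =>
      have hLnone : L.map some none = L.idxFun := by
        funext i
        cases h : L.idxFun i <;> simp [Line.map, h]
      rw [hz, hLnone]
      refine hχ _ _ (Fin.castAdd R j) (by simpa [glue, e] using hj) fun i hi => ?_
      induction i using Fin.addCases with
      | left i => simp [glue, e]
      | right i => exact absurd hi (by simp [Fin.le_def]; omega)
    | succ t =>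
      obtain ⟨a, ha⟩ := Option.ne_none_iff_exists'.1 (hlt 0 t.succ_pos)
      rw [ha, Line.map_apply, hL]
      exact hc (Fin.tail z) t hz fun i hi => hlt i.succ (Fin.succ_lt_succ_iff.2 hi)

theorem exists_mono_mapSubspace (α K : Type u) [Finite α] [Nonempty α] [Finite K]
    (m : ℕ) : ∃ (ι : Type) (_ : Fintype ι), ∀ χ : (ι → Option α) → K,
      ∃ σ : Subspace (Fin m) α ι, ∃ c, ∀ z : Fin m → Option α, (∃ e, z e = none) →
        χ (mapSubspace some σ z) = c := by
  have := Fintype.ofFinite K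
  obtain ⟨M, hM⟩ := exists_mono_by_first_none α K (Fintype.card K * m)
  obtain ⟨ι, _, hι⟩ := exists_prefixDetermined_mapSubspace α M K
  refine ⟨ι, inferInstance, fun χ => ?_⟩
  obtain ⟨σ, hσ⟩ := hι χ
  obtain ⟨τ, c, hτ⟩ := hM _ hσ
  have : Nonempty K := ⟨χ fun _ => none⟩
  obtain ⟨q, hq⟩ : ∃ q, m ≤ Fintype.card {i // c i = q} := by
    obtain ⟨q, -, hq⟩ := Finset.exists_le_card_fiber_of_mul_le_card_of_maps_to (s := univ)
      (t := univ) (f := c) (n := m) (fun _ _ => mem_univ _) univ_nonempty (by simp)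
    exact ⟨q, by rwa [Fintype.card_subtype]⟩
  obtain ⟨_, _, -, ⟨e⟩⟩ := exists_equiv_sum (ι := {i // c i = q}) (κ := Fin m) (by simpa)
  let e' := (Equiv.sumCompl fun i => c i = q).symm
  let a : α := Classical.arbitrary α
  let ρ := compSubspace (leftSubspace e' fun _ => a) (leftSubspace e fun _ => a)
  refine ⟨compSubspace σ (compSubspace τ ρ), q, fun z ⟨i, hi⟩ => ?_⟩
  have hρ : mapSubspace some ρ z = glue e' (glue e z fun _ => some a) fun _ => some a := by
    simp only [ρ, mapSubspace_compSubspace, compSubspace_apply, mapSubspace_leftSubspace_apply]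
    rfl
  have hnone : ∃ s, mapSubspace some ρ z s = none :=
    ⟨_, (congrFun hρ (e.symm (Sum.inl i)).1).trans (by simpa [glue, e', (e.symm _).2] using hi)⟩
  have hcolor (s) (hs : mapSubspace some ρ z s = none) : c s = q := by
    by_contra hne
    simp [hρ, glue, e', hne] at hs
  simp only [mapSubspace_compSubspace, compSubspace_apply]
  exact (hτ _ _ (Fin.find_spec hnone) fun s hs => Fin.find_min hnone hs).trans
    (hcolor _ (Fin.find_spec hnone))

end GrahamRothschild

section DensityHalesJewett

variable {α β ι κ : Type*}

instance finite_line [Finite α] [Finite ι] : Finite (Line α ι) :=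
  Finite.of_injective Line.idxFun fun _ _ => Line.ext

/-- The density Hales–Jewett property of an alphabet: dense sets of long words contain a
combinatorial line. -/
def DensityHalesJewett (α : Type*) [Fintype α] : Prop :=
  ∀ δ : ℝ, 0 < δ → ∃ N : ℕ, ∀ (ι : Type) [Fintype ι], N ≤ Fintype.card ι →
    ∀ A : Set (ι → α), δ ≤ density A → ∃ L : Line α ι, ∀ a, L a ∈ A

theorem exists_density_le_density_setOf_line {Y : Type*} [Fintype α] [Fintype κ]
    [Nonempty κ] [Fintype Y] [Nonempty Y] {δ : ℝ} (hδ : 0 ≤ δ)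
    (h : ∀ A : Set (κ → α), δ / 2 ≤ density A → ∃ L : Line α κ, ∀ a, L a ∈ A)
    {F : (κ → α) → Set Y} (hF : δ ≤ 𝔼 x, density (F x)) :
    ∃ L : Line α κ, δ / 2 / Nat.card (Line α κ) ≤ density {y | ∀ a, y ∈ F (L a)} := by
  have : Nonempty (Line α κ) := ⟨Line.diagonal α κ⟩
  obtain ⟨L, hL⟩ := exists_density_le_card_mul
    (s := {y | δ / 2 ≤ density {x | y ∈ F x}}) (t := fun L : Line α κ => {y | ∀ a, y ∈ F (L a)})
    fun y hy => Set.mem_iUnion.2 (h _ hy)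
  refine ⟨L, (div_le_iff₀' (mod_cast Nat.card_pos)).2 (le_trans ?_ hL)⟩
  exact half_le_density_setOf_half_le hδ (fun y => density_le_one _)
    (hF.trans_eq (expect_density_comm fun x y => y ∈ F x).symm)

theorem DensityHalesJewett.exists_subspace [Fintype α] [Nonempty α] (h : DensityHalesJewett α)
    (d : ℕ) {δ : ℝ} (hδ : 0 < δ) : ∃ N : ℕ, ∀ (ι : Type) [Fintype ι], N ≤ Fintype.card ι →
      ∀ A : Set (ι → α), δ ≤ density A → ∃ σ : Subspace (Fin d) α ι, ∀ x, σ x ∈ A := by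
  induction d generalizing δ with
  | zero =>
    refine ⟨0, fun ι _ _ A hA => ?_⟩
    obtain ⟨x, hx⟩ := nonempty_of_density_pos (hδ.trans_le hA)
    exact ⟨⟨fun i => Sum.inl (x i), fun e => e.elim0⟩, fun _ => hx⟩
  | succ d ih =>
    obtain ⟨N₁, h₁⟩ := h (δ / 2) (half_pos hδ)
    have : Nonempty (Line α (Fin (N₁ + 1))) := ⟨Line.diagonal α _⟩
    obtain ⟨N₂, h₂⟩ := ih (δ := δ / 2 / Nat.card (Line α (Fin (N₁ + 1))))
      (div_pos (half_pos hδ) (mod_cast Nat.card_pos))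
    refine ⟨N₁ + 1 + N₂, fun ι _ hι A hA => ?_⟩
    obtain ⟨l, _, hl, ⟨e⟩⟩ := exists_equiv_sum (ι := ι) (κ := Fin (N₁ + 1)) (by simp; omega)
    obtain ⟨L, hL⟩ := exists_density_le_density_setOf_line hδ.le (h₁ (Fin (N₁ + 1)) (by simp))
      (hA.trans_eq (density_eq_expect_glue' e A))
    obtain ⟨τ, hτ⟩ := h₂ l (by simp [hl]; omega) _ hL
    exact ⟨consSubspace e L τ, fun x => consSubspace_apply e L τ x ▸ hτ (Fin.tail x) (x 0)⟩

/-- The word obtained from a variable word by substituting the letter `a` for the variable. -/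
def substVar (a : α) (x : ι → Option α) : ι → α := fun i => (x i).getD a

/-- A set of words over `Option α` is insensitive for the letter `a` if replacing letters `none`
by `some a`, or conversely, does not affect membership. -/
def Insensitive (a : α) (D : Set (ι → Option α)) : Prop :=
  ∀ x, x ∈ D ↔ some ∘ substVar a x ∈ D

theorem substVar_some_comp (a b : α) (x : ι → Option α) :
    substVar a (some ∘ substVar b x) = substVar b x := rfl

theorem substVar_subspace_apply (a : α) (σ : Subspace κ (Option α) ι) (x : κ → Option α) :
    substVar a (σ (some ∘ substVar a x)) = substVar a (σ x) := by
  funext i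
  simp only [substVar, Subspace.apply_def]
  cases σ.idxFun i <;> rfl

theorem Insensitive.preimage {a : α} {D : Set (ι → Option α)} (h : Insensitive a D)
    (σ : Subspace κ (Option α) ι) : Insensitive a (σ ⁻¹' D) := fun x => by
  rw [Set.mem_preimage, Set.mem_preimage, h (σ x), h (σ _), substVar_subspace_apply]

/-- The word with support `Q` (the set of letters other than `none`) and letters `y` on it. -/
noncomputable def withSupport (Q : Finset ι) (y : Q → α) : ι → Option α :=
  glue (Equiv.sumCompl (· ∈ Q)).symm (some ∘ y) fun _ => none

theorem withSupport_apply_of_mem {Q : Finset ι} (y : Q → α) {i : ι} (h : i ∈ Q) :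
    withSupport Q y i = some (y ⟨i, h⟩) := by
  simp [withSupport, glue, Equiv.sumCompl_symm_apply_of_pos h]

theorem withSupport_apply_of_notMem {Q : Finset ι} (y : Q → α) {i : ι} (h : i ∉ Q) :
    withSupport Q y i = none := by
  simp [withSupport, glue, Equiv.sumCompl_symm_apply_of_neg h]

theorem sum_withSupport [Fintype α] [Fintype ι] (f : (ι → Option α) → ℝ) :
    ∑ Q : Finset ι, ∑ y : Q → α, f (withSupport Q y) = ∑ x, f x := by
  rw [← Fintype.sum_sigma']
  refine Fintype.sum_bijective (fun p : (Q : Finset ι) × (Q → α) => withSupport p.1 p.2)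
    ⟨?_, fun x => ?_⟩ _ _ fun _ => rfl
  · rintro ⟨Q, y⟩ ⟨Q', y'⟩ h
    have hQ : Q = Q' := by
      ext i
      have hi := congrFun h i
      by_cases hiQ : i ∈ Q <;> by_cases hiQ' : i ∈ Q' <;>
        simp_all [withSupport_apply_of_mem, withSupport_apply_of_notMem]
    subst hQ
    congr 1
    funext i
    simpa [withSupport_apply_of_mem _ i.2] using congrFun h i
  · refine ⟨⟨univ.filter fun i => (x i).isSome, fun i => (x i).get (mem_filter.1 i.2).2⟩, ?_⟩
    funext i
    by_cases hi : (x i).isSome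
    · have hQ : i ∈ univ.filter fun i => (x i).isSome := mem_filter.2 ⟨mem_univ i, hi⟩
      simp only [withSupport_apply_of_mem _ hQ, Option.some_get]
    · have hQ : i ∉ univ.filter fun i => (x i).isSome := fun h => hi (mem_filter.1 h).2
      simp only [withSupport_apply_of_notMem _ hQ, Option.not_isSome_iff_eq_none.1 hi]

theorem Insensitive.exists_subspace_of_withSupport {η : Type*} {a : α} {D : Set (ι → Option α)}
    (h : Insensitive a D) {Q : Finset ι} {τ : Subspace η α Q} (hτ : ∀ x, withSupport Q (τ x) ∈ D) :
    ∃ σ : Subspace η (Option α) ι, ∀ x, σ x ∈ D := by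
  let σ := compSubspace (leftSubspace (Equiv.sumCompl (· ∈ Q)).symm fun _ => none)
    (mapSubspace some τ)
  refine ⟨σ, fun x => (h.preimage σ x).2 ?_⟩
  rw [Set.mem_preimage, compSubspace_apply, leftSubspace_apply, mapSubspace_apply_comp]
  exact hτ _

theorem exists_two_pow_mul_pow_le (k : ℕ) (hk : 0 < k) (N : ℕ) {ε : ℝ} (hε : 0 < ε) :
    ∃ n₀ : ℕ, ∀ n ≥ n₀, 2 ^ N * (k / 2 + 1 : ℝ) ^ n ≤ ε * (k + 1 : ℝ) ^ n := by
  have hk' : (0 : ℝ) < k := mod_cast hk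
  have hlt : (k / 2 + 1 : ℝ) / (k + 1) < 1 := by
    rw [div_lt_one (by positivity)]
    linarith
  obtain ⟨n₀, hn₀⟩ := exists_pow_lt_of_lt_one (show 0 < ε / 2 ^ N by positivity) hlt
  refine ⟨n₀, fun n hn => ?_⟩
  have hle := (pow_le_pow_of_le_one (by positivity) hlt.le hn).trans hn₀.le
  rw [div_pow, div_le_div_iff₀ (by positivity) (by positivity)] at hle
  linarith

theorem pow_mul_le_of_le_of_le_one {k x ε : ℝ} (hk : 0 ≤ k) (hε : 0 ≤ ε) (hx : x ≤ 1) {N q : ℕ}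
    (h : N ≤ q → x ≤ ε) : k ^ q * x ≤ ε * k ^ q + 2 ^ N * (k / 2) ^ q := by
  by_cases hq : N ≤ q
  · rw [mul_comm]
    exact (mul_le_mul_of_nonneg_right (h hq) (by positivity)).trans
      (le_add_of_nonneg_right (by positivity))
  · calc k ^ q * x ≤ k ^ q := mul_le_of_le_one_right (by positivity) hx
      _ = 2 ^ q * (k / 2) ^ q := by rw [← mul_pow, mul_div_cancel₀ _ two_ne_zero]
      _ ≤ 2 ^ N * (k / 2) ^ q := by
        gcongr
        · norm_num
        · omega
      _ ≤ _ := le_add_of_nonneg_left (by positivity)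

theorem pow_mul_density_le_of_withSupport [Fintype α] [Fintype ι] {ε : ℝ} (hε : 0 ≤ ε) {N : ℕ}
    {D : Set (ι → Option α)} (h : ∀ Q : Finset ι, N ≤ #Q → density (withSupport Q ⁻¹' D) ≤ ε) :
    (Fintype.card α + 1 : ℝ) ^ Fintype.card ι * density D ≤
      ε * (Fintype.card α + 1) ^ Fintype.card ι +
        2 ^ N * (Fintype.card α / 2 + 1) ^ Fintype.card ι := by
  have hpow (t : ℝ) : ∑ Q : Finset ι, t ^ #Q = (t + 1) ^ Fintype.card ι := by
    simpa using Finset.sum_pow_mul_eq_add_pow t 1 (univ : Finset ι)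
  calc (Fintype.card α + 1 : ℝ) ^ Fintype.card ι * density D
      = ∑ x, D.indicator (1 : (ι → Option α) → ℝ) x := by rw [← card_mul_density]; simp
    _ = ∑ Q : Finset ι, (Fintype.card α : ℝ) ^ #Q * density (withSupport Q ⁻¹' D) := by
      rw [← sum_withSupport]
      refine sum_congr rfl fun Q _ => ?_
      have hcard : (Fintype.card α : ℝ) ^ #Q = Fintype.card (Q → α) := by simp
      rw [hcard, card_mul_density]
      rfl
    _ ≤ ∑ Q : Finset ι, (ε * Fintype.card α ^ #Q + 2 ^ N * (Fintype.card α / 2 : ℝ) ^ #Q) :=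
      sum_le_sum fun Q _ =>
        pow_mul_le_of_le_of_le_one (Nat.cast_nonneg _) hε (density_le_one _) (h Q)
    _ = _ := by rw [sum_add_distrib, ← mul_sum, ← mul_sum, hpow, hpow]

theorem DensityHalesJewett.exists_subspace_of_insensitive [Fintype α] [Nonempty α]
    (h : DensityHalesJewett α) (a : α) (d : ℕ) {ε : ℝ} (hε : 0 < ε) :
    ∃ N : ℕ, ∀ (ι : Type) [Fintype ι], N ≤ Fintype.card ι → ∀ D : Set (ι → Option α),
      Insensitive a D → ε ≤ density D → ∃ σ : Subspace (Fin d) (Option α) ι, ∀ x, σ x ∈ D := by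
  obtain ⟨N', hN'⟩ := h.exists_subspace d (δ := ε / 3) (by positivity)
  obtain ⟨N, hN⟩ := exists_two_pow_mul_pow_le (Fintype.card α) Fintype.card_pos N'
    (ε := ε / 3) (by positivity)
  refine ⟨N, fun ι _ hι D hD hεD => ?_⟩
  by_contra hcon
  have hle := pow_mul_density_le_of_withSupport (D := D) (ε := ε / 3) (N := N') (by positivity)
    fun Q hQ => by
      by_contra! hlt
      obtain ⟨τ, hτ⟩ := hN' Q (by simpa using hQ) (withSupport Q ⁻¹' D)
        (hlt.le.trans_eq (by congr!))
      exact hcon (hD.exists_subspace_of_withSupport hτ)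
  have hpos : (0 : ℝ) < (Fintype.card α + 1 : ℝ) ^ Fintype.card ι := by positivity
  linarith [hN _ hι, mul_pos hpos hε, mul_le_mul_of_nonneg_left hεD hpos.le]

/-- Functions on words whose average over every subspace of dimension `η` is nonpositive. -/
def NonposOnSubspaces (η : Type*) [Fintype η] [Fintype β] (f : (ι → β) → ℝ) : Prop :=
  ∀ σ : Subspace η β ι, 𝔼 x, f (σ x) ≤ 0

section NonposOnSubspaces

variable {η : Type*} [Fintype η] [Fintype β] {f : (ι → β) → ℝ}

theorem nonposOnSubspaces_sub_const [Nonempty β] {c : ℝ}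
    (h : ∀ σ : Subspace η β ι, 𝔼 x, f (σ x) ≤ c) :
    NonposOnSubspaces η fun x => f x - c := fun σ => by
  rw [Finset.expect_sub_distrib, Fintype.expect_const]
  exact sub_nonpos.2 (h σ)

theorem NonposOnSubspaces.comp (h : NonposOnSubspaces η f) (σ : Subspace κ β ι) :
    NonposOnSubspaces η fun x => f (σ x) := fun τ => by
  simpa only [compSubspace_apply] using h (compSubspace σ τ)

theorem NonposOnSubspaces.expect_nonpos [Fintype ι] (h : NonposOnSubspaces η f)
    (hη : Fintype.card η ≤ Fintype.card ι) : 𝔼 x, f x ≤ 0 := by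
  obtain ⟨_, _, -, ⟨e⟩⟩ := exists_equiv_sum hη
  rw [expect_glue e]
  refine (Finset.expect_le_expect fun y _ => ?_).trans_eq (Finset.expect_const_zero _)
  simpa only [leftSubspace_apply] using h (leftSubspace e y)

theorem NonposOnSubspaces.expect_indicator_range_nonpos [Fintype ι] (h : NonposOnSubspaces η f)
    (σ : Subspace η β ι) : 𝔼 x, (Set.range σ).indicator f x ≤ 0 := by
  have hsum : ∑ x, f (σ x) = ∑ x, (Set.range σ).indicator f x :=
    Fintype.sum_of_injective σ (subspace_injective σ) _ _
      (fun _ hx => Set.indicator_of_notMem hx f) fun x => by simp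
  rw [Fintype.expect_eq_sum_div_card, ← hsum, ← Fintype.card_mul_expect]
  exact div_nonpos_of_nonpos_of_nonneg
    (mul_nonpos_of_nonneg_of_nonpos (Nat.cast_nonneg _) (h σ)) (Nat.cast_nonneg _)

theorem exists_subset_expect_indicator_nonpos [Nonempty β] [Fintype ι] {ε : ℝ} (hε : 0 ≤ ε)
    {E : Set (ι → β)} (h : ε ≤ density E → ∃ σ : Subspace η β ι, ∀ x, σ x ∈ E) :
    ∃ U ⊆ E, (∀ g, NonposOnSubspaces η g → 𝔼 x, U.indicator g x ≤ 0) ∧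
      density (E \ U) ≤ (1 - (Fintype.card (ι → β) : ℝ)⁻¹) * density E +
        (Fintype.card (ι → β) : ℝ)⁻¹ * ε := by
  have hpos : (0 : ℝ) ≤ (Fintype.card (ι → β) : ℝ)⁻¹ := by positivity
  by_cases hE : ε ≤ density E
  · obtain ⟨σ, hσ⟩ := h hE
    have hUE : Set.range σ ⊆ E := Set.range_subset_iff.2 hσ
    refine ⟨Set.range σ, hUE, fun g hg => hg.expect_indicator_range_nonpos σ, ?_⟩
    have hU := inv_card_le_density (Set.range_nonempty σ)
    have hdiff := density_inter_add_density_diff E (Set.range σ)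
    rw [Set.inter_eq_self_of_subset_right hUE] at hdiff
    linarith [mul_le_of_le_one_right hpos (density_le_one E), mul_nonneg hpos hε]
  · refine ⟨∅, Set.empty_subset _, by simp, ?_⟩
    rw [Set.sdiff_empty]
    linarith [mul_le_mul_of_nonneg_left (not_le.1 hE).le hpos]

theorem expect_indicator_le_expect_fibres [Fintype ι] [Fintype κ] [Fintype l] (e : ι ≃ κ ⊕ l)
    (hf : NonposOnSubspaces η f) {D : Set (ι → β)} {U : (l → β) → Set (κ → β)}
    (hUD : ∀ y, U y ⊆ {x | glue e x y ∈ D})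
    (hU : ∀ y g, NonposOnSubspaces η g → 𝔼 x, (U y).indicator g x ≤ 0) :
    𝔼 w, D.indicator f w ≤
      𝔼 x, 𝔼 y, {y | glue e x y ∈ D ∧ x ∉ U y}.indicator (fun y => f (glue e x y)) y := by
  rw [expect_glue e, Finset.expect_comm univ univ (fun x : κ → β => _)]
  refine Finset.expect_le_expect fun y _ => ?_
  have hneg := hU y _ (by simpa only [leftSubspace_apply] using hf.comp (leftSubspace e y))
  have hsplit (x : κ → β) : D.indicator f (glue e x y) =
      (U y).indicator (fun x => f (glue e x y)) x +
        {y | glue e x y ∈ D ∧ x ∉ U y}.indicator (fun y => f (glue e x y)) y := by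
    by_cases hx : x ∈ U y
    · have hD : glue e x y ∈ D := hUD y hx
      simp [hx, hD]
    · simp [hx, Set.indicator_apply]
  simp only [hsplit, Finset.expect_add_distrib]
  linarith

end NonposOnSubspaces

theorem expect_density_fibres_le [Fintype β] [Nonempty β] [Fintype ι] [Fintype κ] [Fintype l]
    (e : ι ≃ κ ⊕ l) {D : Set (ι → β)} {U : (l → β) → Set (κ → β)} {p r : ℝ}
    (hU : ∀ y, density ({x | glue e x y ∈ D} \ U y) ≤ p * density {x | glue e x y ∈ D} + r) :
    𝔼 x, density {y | glue e x y ∈ D ∧ x ∉ U y} ≤ p * density D + r := by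
  rw [← expect_density_comm fun x y => glue e x y ∈ D ∧ x ∉ U y, density_eq_expect_glue e,
    Finset.mul_expect, ← Fintype.expect_const (ι := l → β) r, ← Finset.expect_add_distrib]
  exact Finset.expect_le_expect fun y _ => hU y

theorem Insensitive.glue_left {a : α} {D : Set (ι → Option α)} (h : Insensitive a D)
    (e : ι ≃ κ ⊕ l) (y : l → Option α) : Insensitive a {x | glue e x y ∈ D} := by
  simpa only [Set.preimage, leftSubspace_apply] using h.preimage (leftSubspace e y)

theorem Insensitive.glue_right {a : α} {D : Set (ι → Option α)} (h : Insensitive a D)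
    (e : ι ≃ κ ⊕ l) (x : κ → Option α) : Insensitive a {y | glue e x y ∈ D} := by
  simpa only [Set.preimage, rightSubspace_apply] using h.preimage (rightSubspace e x)

theorem exists_expect_indicator_insensitive_le {η κ : Type} [Fintype η] [Fintype κ] [Fintype α]
    {a : α} {ε : ℝ} (hε : 0 ≤ ε) (h : ∀ E : Set (κ → Option α), Insensitive a E → ε ≤ density E →
      ∃ σ : Subspace η (Option α) κ, ∀ x, σ x ∈ E) :
    ∃ q : ℝ, 0 ≤ q ∧ q < 1 ∧ ∀ (T : ℕ) (ι : Type) [Fintype ι],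
      Fintype.card κ * T ≤ Fintype.card ι → ∀ f : (ι → Option α) → ℝ, (∀ x, f x ≤ 1) →
      NonposOnSubspaces η f → ∀ D, Insensitive a D →
        𝔼 x, D.indicator f x ≤ ε * (1 - q ^ T) + q ^ T * density D := by
  choose U hUE hUneg hUdens using fun E : {E // Insensitive a E} =>
    exists_subset_expect_indicator_nonpos hε (E := E.1) (h E.1 E.2)
  set p := (Fintype.card (κ → Option α) : ℝ)⁻¹
  have hp₀ : 0 < p := inv_pos.2 (mod_cast Fintype.card_pos)
  have hp₁ : p ≤ 1 := inv_le_one_of_one_le₀ (mod_cast Fintype.card_pos)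
  refine ⟨1 - p, sub_nonneg.2 hp₁, by linarith, fun T => ?_⟩
  induction T with
  | zero =>
    intro ι _ _ f hf _ D _
    rw [pow_zero, sub_self, mul_zero, zero_add, one_mul]
    exact expect_le_density fun x => Set.indicator_le_indicator (hf x)
  | succ T ih =>
    intro ι _ hι f hf hneg D hD
    rw [Nat.mul_succ] at hι
    obtain ⟨l, _, hl, ⟨e⟩⟩ := exists_equiv_sum (ι := ι) (κ := κ) (by omega)
    let V y := U ⟨_, hD.glue_left e y⟩
    let R x := {y | glue e x y ∈ D ∧ x ∉ V y}
    have hR (x) : Insensitive a (R x) := fun y => by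
      have hV : V y = V (some ∘ substVar a y) :=
        congrArg U (Subtype.ext (Set.ext fun x => hD.glue_right e x y))
      exact and_congr (hD.glue_right e x y) (not_congr (by rw [hV]))
    calc 𝔼 x, D.indicator f x
        ≤ 𝔼 x, 𝔼 y, (R x).indicator (fun y => f (glue e x y)) y :=
          expect_indicator_le_expect_fibres e hneg (fun y => hUE _) fun y => hUneg _
      _ ≤ 𝔼 x, (ε * (1 - (1 - p) ^ T) + (1 - p) ^ T * density (R x)) :=
          Finset.expect_le_expect fun x _ => ih l (by omega) _ (fun y => hf _)
            (by simpa only [rightSubspace_apply] using hneg.comp (rightSubspace e x)) _ (hR x)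
      _ = ε * (1 - (1 - p) ^ T) + (1 - p) ^ T * 𝔼 x, density (R x) := by
          rw [Finset.expect_add_distrib, Fintype.expect_const, ← Finset.mul_expect]
      _ ≤ ε * (1 - (1 - p) ^ T) + (1 - p) ^ T * ((1 - p) * density D + p * ε) := by
          gcongr
          exact expect_density_fibres_le e fun y => hUdens ⟨_, hD.glue_left e y⟩
      _ = ε * (1 - (1 - p) ^ (T + 1)) + (1 - p) ^ (T + 1) * density D := by ring

theorem DensityHalesJewett.exists_expect_indicator_iInter_le [Fintype α] [Nonempty α]
    (h : DensityHalesJewett α) (B : Finset α) (d : ℕ) {ε : ℝ} (hε : 0 < ε) :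
    ∃ N : ℕ, ∀ (ι : Type) [Fintype ι], N ≤ Fintype.card ι →
      ∀ f : (ι → Option α) → ℝ, (∀ x, f x ≤ 1) → NonposOnSubspaces (Fin d) f →
      ∀ D : α → Set (ι → Option α), (∀ a, Insensitive a (D a)) →
        𝔼 x, (⋂ a ∈ B, D a).indicator f x ≤ ε := by
  induction B using Finset.induction_on generalizing d ε with
  | empty =>
    refine ⟨d, fun ι _ hι f _ hneg D _ => ?_⟩
    simpa using (hneg.expect_nonpos (by simpa using hι)).trans hε.le
  | insert a B _ ih =>
    obtain ⟨d', hd'⟩ := ih d (half_pos hε)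
    obtain ⟨N, hN⟩ := h.exists_subspace_of_insensitive a d' (ε := ε / 4) (by positivity)
    obtain ⟨q, hq₀, hq₁, hq⟩ :=
      exists_expect_indicator_insensitive_le (by positivity) (hN (Fin N) (by simp))
    obtain ⟨T, hT⟩ := exists_pow_lt_of_lt_one (show 0 < ε / 4 by positivity) hq₁
    refine ⟨N * T, fun ι _ hι f hf hneg D hD => ?_⟩
    let g x := (⋂ b ∈ B, D b).indicator f x
    have hg (x) : g x ≤ 1 := Set.indicator_le' (fun x _ => hf x) (fun _ _ => zero_le_one) x
    have hgneg : NonposOnSubspaces (Fin d') fun x => g x - ε / 2 :=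
      nonposOnSubspaces_sub_const fun σ => by
        simpa [g, Set.indicator_apply] using hd' (Fin d') (by simp) (fun y => f (σ y))
          (fun y => hf _) (hneg.comp σ) (fun b => σ ⁻¹' D b) fun b => (hD b).preimage σ
    have hDa := hq T ι (by simpa using hι) _
      (fun x => (sub_le_self _ (by positivity)).trans (hg x)) hgneg (D a) (hD a)
    have hle : 𝔼 x, (⋂ b ∈ insert a B, D b).indicator f x ≤
        𝔼 x, ((D a).indicator (fun x => g x - ε / 2) x + ε / 2) := by
      refine Finset.expect_le_expect fun x _ => ?_
      by_cases hx : x ∈ D a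
      · simp [g, hx, Set.indicator_apply]
      · simp [hx, (half_pos hε).le]
    rw [Finset.expect_add_distrib, Fintype.expect_const] at hle
    have hqT := pow_nonneg hq₀ T
    have := mul_le_of_le_one_right hqT (density_le_one (D a))
    nlinarith

/-- A set of words containing no combinatorial line. -/
def LineFree (A : Set (ι → β)) : Prop := ¬ ∃ L : Line β ι, ∀ b, L b ∈ A

theorem LineFree.preimage {A : Set (ι → β)} (h : LineFree A) (σ : Subspace κ β ι) :
    LineFree (σ ⁻¹' A) := fun ⟨L, hL⟩ =>
  h ⟨lineOfSubspace σ L, fun b => (lineOfSubspace_apply σ L b).symm ▸ hL b⟩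

theorem LineFree.exists_substVar_notMem {A : Set (ι → Option α)} (h : LineFree A)
    {z : ι → Option α} (hz : z ∈ A) (hnone : ∃ i, z i = none) : ∃ a, some ∘ substVar a z ∉ A := by
  by_contra! hA
  refine h ⟨⟨fun i => (z i).map some, hnone.imp fun i hi => by simp [hi]⟩, fun b => ?_⟩
  cases b with
  | none =>
    convert hz
    funext i
    cases hi : z i <;> simp [Line.coe_apply, hi]
  | some a =>
    convert hA a
    funext i
    cases hi : z i <;> simp [Line.coe_apply, substVar, hi]

theorem exists_limit_density_lineFree [Fintype β] (h : ¬ DensityHalesJewett β) :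
    ∃ c : ℝ, 0 < c ∧
      (∀ η : ℝ, 0 < η → ∃ N : ℕ, ∀ (ι : Type) [Fintype ι], N ≤ Fintype.card ι →
        ∀ A : Set (ι → β), LineFree A → density A ≤ c + η) ∧
      ∀ η : ℝ, 0 < η → ∀ N : ℕ, ∃ (ι : Type) (_ : Fintype ι), N ≤ Fintype.card ι ∧
        ∃ A : Set (ι → β), LineFree A ∧ c - η ≤ density A := by
  obtain ⟨δ₀, hδ₀, h⟩ : ∃ δ₀ : ℝ, 0 < δ₀ ∧ ∀ N : ℕ, ∃ (ι : Type) (_ : Fintype ι),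
      N ≤ Fintype.card ι ∧ ∃ A : Set (ι → β), LineFree A ∧ δ₀ ≤ density A := by
    by_contra! h'
    refine h fun δ hδ => (h' δ hδ).imp fun N hN ι _ hι A hA => ?_
    by_contra hfree
    exact (hN ι _ hι A hfree).not_ge hA
  let S : Set ℝ := {δ | ∀ N : ℕ, ∃ (ι : Type) (_ : Fintype ι), N ≤ Fintype.card ι ∧
    ∃ A : Set (ι → β), LineFree A ∧ δ ≤ density A}
  have hδ₀S : δ₀ ∈ S := h
  have hS : BddAbove S := ⟨1, fun δ hδ => by
    obtain ⟨ι, _, -, A, -, hA⟩ := hδ 0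
    exact hA.trans (density_le_one A)⟩
  refine ⟨sSup S, hδ₀.trans_le (le_csSup hS hδ₀S), fun η hη => ?_, fun η hη N => ?_⟩
  · have hnot : sSup S + η ∉ S := fun hmem => by linarith [le_csSup hS hmem]
    obtain ⟨N, hN⟩ := not_forall.1 hnot
    refine ⟨N, fun ι _ hι A hA => ?_⟩
    by_contra! hlt
    exact hN ⟨ι, inferInstance, hι, A, hA, hlt.le⟩
  · obtain ⟨δ, hδ, hlt⟩ := exists_lt_of_lt_csSup ⟨δ₀, hδ₀S⟩ (sub_lt_self (sSup S) hη)
    obtain ⟨ι, _, hι, A, hA, hle⟩ := hδ N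
    exact ⟨ι, inferInstance, hι, A, hA, hlt.le.trans hle⟩

theorem exists_density_setOf_ne_none_le (α : Type*) [Fintype α] {ε : ℝ} (hε : 0 < ε) :
    ∃ N : ℕ, ∀ (ι : Type) [Fintype ι], N ≤ Fintype.card ι →
      density {z : ι → Option α | ∀ i, z i ≠ none} ≤ ε := by
  set k : ℝ := ((Fintype.card α : ℕ) : ℝ) with hk
  have hlt : k / (k + 1) < 1 := (div_lt_one (by positivity)).2 (lt_add_one k)
  obtain ⟨N, hN⟩ := exists_pow_lt_of_lt_one hε hlt
  refine ⟨N, fun ι _ hι => ?_⟩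
  have hrange : {z : ι → Option α | ∀ i, z i ≠ none} = Set.range fun y : ι → α => some ∘ y := by
    ext z
    exact ⟨fun hz => ⟨fun i => (z i).get (Option.isSome_iff_ne_none.2 (hz i)), by ext; simp⟩,
      by rintro ⟨y, rfl⟩ i; simp⟩
  have hcard : (Set.range fun y : ι → α => some ∘ y).ncard = Fintype.card α ^ Fintype.card ι := by
    rw [← Set.image_univ, Set.ncard_image_of_injective _ (Option.some_injective α).comp_left]
    simp
  rw [hrange, density_eq_ncard_div_card, hcard]
  refine le_trans (le_of_eq ?_)
    ((pow_le_pow_of_le_one (by positivity) hlt.le hι).trans hN.le)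
  simp [div_pow, hk]

theorem DensityHalesJewett.exists_expect_indicator_compl_le [Fintype α] [Nonempty α]
    (h : DensityHalesJewett α) (d : ℕ) {ε : ℝ} (hε : 0 < ε) :
    ∃ N : ℕ, ∀ (ι : Type) [Fintype ι], N ≤ Fintype.card ι →
      ∀ f : (ι → Option α) → ℝ, (∀ x, f x ≤ 1) → NonposOnSubspaces (Fin d) f →
      ∀ A : Set (ι → Option α), 𝔼 x, {x | ∀ a, some ∘ substVar a x ∈ A}ᶜ.indicator f x ≤ ε := by
  have hcard : (0 : ℝ) < Fintype.card (Finset α) := mod_cast Fintype.card_pos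
  obtain ⟨N, hN⟩ := h.exists_expect_indicator_iInter_le univ d (div_pos hε hcard)
  refine ⟨N, fun ι _ hι f hf hneg A => ?_⟩
  let types (B : Finset α) : Set (ι → Option α) :=
    ⋂ a ∈ univ, {x | some ∘ substVar a x ∈ A ↔ a ∈ B}
  have htypes : ∀ B, 𝔼 x, (types B).indicator f x ≤ ε / Fintype.card (Finset α) := fun _ =>
    hN ι hι f hf hneg _ fun a x => by simp only [Set.mem_ofPred_eq, substVar_some_comp]
  have hsum (x) : {x | ∀ a, some ∘ substVar a x ∈ A}ᶜ.indicator f x =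
      ∑ B ∈ univ.erase univ, (types B).indicator f x := by
    let B₀ : Finset α := univ.filter fun a => some ∘ substVar a x ∈ A
    have hB₀ : ∀ B, x ∈ types B ↔ B = B₀ := fun _ => by
      simp only [types, B₀, Set.mem_iInter, Set.mem_ofPred_eq, Finset.ext_iff, mem_univ,
        true_implies, mem_filter, true_and]
      exact forall_congr' fun a => Iff.comm
    have huniv : (∀ a, some ∘ substVar a x ∈ A) ↔ univ = B₀ := by
      simp [B₀, Finset.ext_iff]
    simp only [Set.indicator_apply, hB₀, Set.mem_compl_iff, Set.mem_ofPred_eq, huniv, sum_ite_eq',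
      mem_erase, mem_univ, and_true, ne_comm (a := univ), ne_eq]
  simp only [hsum]
  rw [Finset.expect_sum_comm]
  calc ∑ B ∈ univ.erase univ, 𝔼 x, (types B).indicator f x
      ≤ ∑ _B ∈ (univ.erase univ : Finset (Finset α)), ε / Fintype.card (Finset α) :=
        sum_le_sum fun B _ => htypes B
    _ ≤ ∑ _B : Finset α, ε / Fintype.card (Finset α) :=
      sum_le_sum_of_subset_of_nonneg (erase_subset _ _) fun _ _ _ => by positivity
    _ = ε := by
      rw [sum_const, card_univ, nsmul_eq_mul, mul_div_cancel₀ _ hcard.ne']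

theorem LineFree.indicator_setOf_substVar_mem_le {A : Set (ι → Option α)} (hA : LineFree A)
    {c r : ℝ} (hr : 0 ≤ r) (hrc : c ≤ r) (x : ι → Option α) :
    {x | ∀ a, some ∘ substVar a x ∈ A}.indicator (fun x => A.indicator 1 x - r) x ≤
      {z | ∀ i, z i ≠ none}.indicator 1 x -
        c * {x | ∀ a, some ∘ substVar a x ∈ A}.indicator 1 x := by
  have hconst : (0 : ℝ) ≤ {z : ι → Option α | ∀ i, z i ≠ none}.indicator 1 x :=
    Set.indicator_nonneg (fun _ _ => zero_le_one) x
  by_cases hG : ∀ a, some ∘ substVar a x ∈ A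
  · by_cases hx : x ∈ A
    · have hnone : ∀ i, x i ≠ none := by
        by_contra! hi
        exact (hA.exists_substVar_notMem hx hi).elim fun a ha => ha (hG a)
      simp only [Set.indicator_apply, Set.mem_ofPred_eq, hG, hx, hnone, implies_true, if_true,
        Pi.one_apply, ne_eq, not_false_eq_true]
      linarith
    · simp only [Set.indicator_apply, Set.mem_ofPred_eq, hG, hx, implies_true, if_true, if_false,
        Pi.one_apply] at hconst ⊢
      linarith [hr]
  · simpa [hG] using hconst

theorem DensityHalesJewett.exists_density_add_mul_density_le [Fintype α] [Nonempty α]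
    (h : DensityHalesJewett α) {c : ℝ} (hc : 0 < c)
    (hsup : ∀ η : ℝ, 0 < η → ∃ N : ℕ, ∀ (ι : Type) [Fintype ι], N ≤ Fintype.card ι →
      ∀ A : Set (ι → Option α), LineFree A → density A ≤ c + η) {ε : ℝ} (hε : 0 < ε) :
    ∃ N : ℕ, ∀ (ι : Type) [Fintype ι], N ≤ Fintype.card ι → ∀ A : Set (ι → Option α), LineFree A →
      density A + c * density {x | ∀ a, some ∘ substVar a x ∈ A} ≤ c + ε := by
  obtain ⟨d, hd⟩ := hsup (ε / 3) (by positivity)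
  obtain ⟨N₁, hN₁⟩ := h.exists_expect_indicator_compl_le d (ε := ε / 3) (by positivity)
  obtain ⟨N₂, hN₂⟩ := exists_density_setOf_ne_none_le α (ε := ε / 3) (by positivity)
  refine ⟨max N₁ N₂, fun ι _ hι A hA => ?_⟩
  set G := {x | ∀ a, some ∘ substVar a x ∈ A}
  let f x := A.indicator 1 x - (c + ε / 3)
  have hf (x) : f x ≤ 1 := sub_le_iff_le_add.2 <|
    (Set.indicator_le' (fun _ _ => le_rfl) (fun _ _ => zero_le_one) x).trans
      (le_add_of_nonneg_right (by positivity))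
  have hneg : NonposOnSubspaces (Fin d) f := nonposOnSubspaces_sub_const fun σ =>
    hd (Fin d) (by simp) _ (hA.preimage σ)
  have hsplit : 𝔼 x, f x = 𝔼 x, G.indicator f x + 𝔼 x, Gᶜ.indicator f x := by
    simp only [← Finset.expect_add_distrib, ← Pi.add_apply, Set.indicator_self_add_compl]
  have hfA : 𝔼 x, f x = density A - (c + ε / 3) := by
    simp only [f]
    rw [Finset.expect_sub_distrib, Fintype.expect_const, density]
  have hGle : 𝔼 x, G.indicator f x ≤
      density {z : ι → Option α | ∀ i, z i ≠ none} - c * density G := by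
    rw [density, density, Finset.mul_expect, ← Finset.expect_sub_distrib]
    exact Finset.expect_le_expect fun x _ =>
      hA.indicator_setOf_substVar_mem_le (by positivity) (le_add_of_nonneg_right (by positivity)) x
  have hGc := hN₁ ι ((le_max_left _ _).trans hι) f hf hneg A
  have hconst := hN₂ ι ((le_max_right _ _).trans hι)
  linarith

theorem sub_card_mul_le_of_le_expect {X : Type*} [Fintype X] {f : X → ℝ} {M μ : ℝ}
    (hf : ∀ x, f x ≤ M) (h : μ ≤ 𝔼 x, f x) (x : X) : M - Fintype.card X * (M - μ) ≤ f x := by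
  have : Nonempty X := ⟨x⟩
  have hle : M - f x ≤ ∑ y, (M - f y) :=
    single_le_sum (f := fun y => M - f y) (fun y _ => sub_nonneg.2 (hf y)) (mem_univ x)
  rw [← Fintype.card_mul_expect, Finset.expect_sub_distrib, Fintype.expect_const] at hle
  have := mul_le_mul_of_nonneg_left (sub_le_sub_left h M) (Nat.cast_nonneg (Fintype.card X))
  linarith

theorem substVar_mapSubspace (a : α) (σ : Subspace κ α ι) (z : κ → Option α) :
    substVar a (mapSubspace some σ z) = σ (substVar a z) := by
  funext i
  rw [substVar, mapSubspace_apply, Subspace.apply_def]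
  cases σ.idxFun i <;> rfl

theorem substVar_idxFun (L : Line α ι) (a : α) : substVar a L.idxFun = L a := rfl

theorem DensityHalesJewett.exists_subspace_density_substVar {α : Type} [Fintype α] [Nonempty α]
    (h : DensityHalesJewett α) {δ : ℝ} (hδ : 0 < δ) :
    ∃ θ : ℝ, 0 < θ ∧ ∀ m : ℕ, ∃ (η κ : Type) (_ : Fintype η) (_ : Fintype κ),
      m ≤ Fintype.card η ∧ ∀ (Y : Type) [Fintype Y] [Nonempty Y] (G : (κ → Option α) → Set Y),
        (∀ x, δ ≤ density (G x)) → ∃ σ : Subspace η α κ, ∀ z : η → Option α,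
          (∃ i, z i = none) → θ ≤ density {y | ∀ a, y ∈ G (some ∘ σ (substVar a z))} := by
  obtain ⟨N, hN⟩ := h (δ / 2) (by positivity)
  obtain ⟨D, _, hD⟩ : ∃ (D : Type) (_ : Fintype D), Fintype.card D = N + 1 :=
    ⟨Fin (N + 1), inferInstance, Fintype.card_fin _⟩
  have : Nonempty D := Fintype.card_pos_iff.1 (by lia)
  have : Nonempty (Line α D) := ⟨Line.diagonal α D⟩
  have hcard : 0 < Nat.card (Line α D) := Nat.card_pos
  refine ⟨δ / 2 / Nat.card (Line α D), by positivity, fun m => ?_⟩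
  obtain ⟨κ, _, hκ⟩ := exists_mono_mapSubspace α Prop (max m (N + 1))
  refine ⟨Fin (max m (N + 1)), κ, inferInstance, inferInstance, by simp, fun Y _ _ G hG => ?_⟩
  obtain ⟨σ, c, hσ⟩ := hκ fun z =>
    δ / 2 / Nat.card (Line α D) ≤ density {y | ∀ a, y ∈ G (some ∘ substVar a z)}
  simp only [substVar_mapSubspace] at hσ
  suffices hc : c from ⟨σ, fun z hz => (hσ z hz).mpr hc⟩
  obtain ⟨_, _, -, ⟨e⟩⟩ := exists_equiv_sum (ι := Fin (max m (N + 1))) (κ := D) (by simp [hD])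
  let ρ : Subspace D α (Fin (max m (N + 1))) := leftSubspace e fun _ => Classical.arbitrary α
  obtain ⟨L, hL⟩ := exists_density_le_density_setOf_line hδ.le (hN D (by lia))
    (F := fun u => G (some ∘ σ (ρ u)))
    ((Fintype.expect_const δ).symm.trans_le
      (Finset.expect_le_expect fun u _ => hG _))
  refine (hσ (lineOfSubspace ρ L).idxFun (lineOfSubspace ρ L).proper).mp ?_
  simpa only [substVar_idxFun, lineOfSubspace_apply] using hL

theorem exists_lineFree_le_density_fibres [Fintype β] {c : ℝ}
    (hsup : ∀ η : ℝ, 0 < η → ∃ N : ℕ, ∀ (ι : Type) [Fintype ι], N ≤ Fintype.card ι →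
      ∀ A : Set (ι → β), LineFree A → density A ≤ c + η)
    (hmax : ∀ η : ℝ, 0 < η → ∀ N : ℕ, ∃ (ι : Type) (_ : Fintype ι), N ≤ Fintype.card ι ∧
      ∃ A : Set (ι → β), LineFree A ∧ c - η ≤ density A)
    (κ : Type) [Finite κ] [Nonempty β] {ε : ℝ} (hε : 0 < ε) :
    ∃ (ι l : Type) (_ : Fintype l) (e : ι ≃ κ ⊕ l) (A : Set (ι → β)), LineFree A ∧
      ∀ x : κ → β, c - ε ≤ density {y | glue e x y ∈ A} := by
  have := Fintype.ofFinite κ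
  set η := ε / (2 * Fintype.card (κ → β)) with hη
  have hηpos : 0 < η := by positivity
  obtain ⟨n, hn⟩ := hsup η hηpos
  obtain ⟨ι, _, hι, A, hA, hAc⟩ := hmax η hηpos (Fintype.card κ + n)
  obtain ⟨l, _, hl, ⟨e⟩⟩ := exists_equiv_sum (ι := ι) (κ := κ) (by lia)
  refine ⟨ι, l, inferInstance, e, A, hA, fun x => ?_⟩
  have hle (x : κ → β) : density {y | glue e x y ∈ A} ≤ c + η := by
    simpa only [Set.preimage, rightSubspace_apply] using
      hn l (by lia) _ (hA.preimage (rightSubspace e x))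
  rw [density_eq_expect_glue' e] at hAc
  have hx := sub_card_mul_le_of_le_expect hle hAc x
  have hcancel : Fintype.card (κ → β) * (c + η - (c - η)) = ε := by
    rw [hη]
    field_simp
    ring
  linarith

theorem DensityHalesJewett.option {α : Type} [Fintype α] [Nonempty α]
    (h : DensityHalesJewett α) : DensityHalesJewett (Option α) := by
  by_contra hnot
  obtain ⟨c, hc, hsup, hmax⟩ := exists_limit_density_lineFree hnot
  obtain ⟨θ, hθ, hmono⟩ := h.exists_subspace_density_substVar (half_pos hc)
  obtain ⟨m₀, hm₀⟩ := h.exists_density_add_mul_density_le hc hsup (ε := c * θ / 8) (by positivity)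
  obtain ⟨m₁, hm₁⟩ := exists_density_setOf_ne_none_le α one_half_pos
  obtain ⟨D, κ, _, _, hD, hσ⟩ := hmono (max m₀ m₁)
  obtain ⟨ι, l, _, e, A, hA, hfib⟩ := exists_lineFree_le_density_fibres hsup hmax κ
    (ε := min (c * θ / 8) (c / 2)) (by positivity)
  obtain ⟨σ, hσ⟩ := hσ (l → Option α) (fun x => {y | glue e x y ∈ A}) fun x => by
    linarith [hfib x, min_le_right (c * θ / 8) (c / 2)]
  let τ := mapSubspace some σ
  let B (y : l → Option α) : Set (D → Option α) := {x | glue e (τ x) y ∈ A}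
  have hB (y) : LineFree (B y) := by
    simpa only [B, Set.preimage, leftSubspace_apply, Set.mem_ofPred_eq] using
      (hA.preimage (leftSubspace e y)).preimage τ
  have hle : 𝔼 y, (density (B y) + c * density {x | ∀ a, some ∘ substVar a x ∈ B y}) ≤
      c + c * θ / 8 :=
    (Finset.expect_le_expect fun y _ =>
      hm₀ D ((le_max_left _ _).trans hD) _ (hB y)).trans_eq
      (Fintype.expect_const _)
  have hfst : c - c * θ / 8 ≤ 𝔼 y, density (B y) := by
    rw [expect_density_comm fun x y => glue e (τ x) y ∈ A]
    refine (Fintype.expect_const (ι := D → Option α) _).symm.trans_le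
      (Finset.expect_le_expect fun x _ => ?_)
    linarith [hfib (τ x), min_le_left (c * θ / 8) (c / 2)]
  have hsnd : θ / 2 ≤ 𝔼 y, density {x | ∀ a, some ∘ substVar a x ∈ B y} := by
    rw [expect_density_comm fun x y => ∀ a, some ∘ substVar a x ∈ B y]
    have hnone : 1 / 2 ≤ density {z : D → Option α | ∀ i, z i ≠ none}ᶜ := by
      rw [density_compl]
      linarith [hm₁ D ((le_max_right _ _).trans hD)]
    have hθle : θ * density {z : D → Option α | ∀ i, z i ≠ none}ᶜ ≤
        𝔼 z, density {y | ∀ a, some ∘ substVar a z ∈ B y} :=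
      mul_density_le_expect (fun _ => density_nonneg _) fun z hz => by
        simpa only [B, τ, Set.mem_ofPred_eq, mapSubspace_apply_comp] using
          hσ z (by simpa using hz)
    linarith [mul_le_mul_of_nonneg_left hnone hθ.le]
  rw [Finset.expect_add_distrib, ← Finset.mul_expect] at hle
  nlinarith [mul_pos hc hθ]

theorem DensityHalesJewett.of_equiv [Fintype α] [Fintype β] (h : DensityHalesJewett α)
    (f : α ≃ β) : DensityHalesJewett β := fun δ hδ => (h δ hδ).imp fun N hN ι _ hι A hA => by
  let F : (ι → α) ≃ (ι → β) := Equiv.arrowCongr (Equiv.refl ι) f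
  obtain ⟨L, hL⟩ := hN ι hι (F ⁻¹' A) (by rwa [density_preimage_equiv])
  refine ⟨⟨fun i => (L.idxFun i).map f, L.proper.imp fun i hi => by simp [hi]⟩, fun b => ?_⟩
  convert (show f ∘ L (f.symm b) ∈ A from hL (f.symm b))
  funext i
  cases hi : L.idxFun i <;> simp [Line.coe_apply, hi]

theorem densityHalesJewett_of_subsingleton (α : Type*) [Fintype α] [Subsingleton α] :
    DensityHalesJewett α := fun δ hδ => ⟨1, fun ι _ hι A hA => by
  obtain ⟨x, hx⟩ := nonempty_of_density_pos (hδ.trans_le hA)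
  have : Nonempty ι := Fintype.card_pos_iff.1 hι
  exact ⟨Line.diagonal α ι, fun a => Subsingleton.elim x (Line.diagonal α ι a) ▸ hx⟩⟩

theorem densityHalesJewett (α : Type*) [Fintype α] : DensityHalesJewett α := by
  suffices hfin : ∀ k, DensityHalesJewett (Fin k) from (hfin _).of_equiv (Fintype.equivFin α).symm
  intro k
  induction k with
  | zero => exact densityHalesJewett_of_subsingleton _
  | succ k ih =>
    rcases k.eq_zero_or_pos with rfl | hk
    · exact densityHalesJewett_of_subsingleton (Fin 1)
    · have : NeZero k := ⟨hk.ne'⟩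
      exact ih.option.of_equiv (finSuccEquiv k).symm

end DensityHalesJewett

section LatticePoints

universe u

variable {J : Type*}

theorem finrank_range_add_finrank_ker_of_hasRankNullity {R W : Type*} {V : Type u} [Ring R]
    [StrongRankCondition R] [HasRankNullity.{u} R] [AddCommGroup V] [Module R V]
    [Module.Finite R V] [AddCommGroup W] [Module R W] (f : V →ₗ[R] W) :
    Module.finrank R (LinearMap.range f) + Module.finrank R (LinearMap.ker f) =
      Module.finrank R V := by
  rw [← f.quotKerEquivRange.finrank_eq, Submodule.finrank_quotient_add_finrank]

theorem finrank_inf_ker_lt {R V : Type*} [CommRing R] [IsDomain R] [IsNoetherianRing R]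
    [AddCommGroup V] [Module R V] [Module.Finite R V] {M : Submodule R V} {f : V →ₗ[R] R} {v : V}
    (hv : v ∈ M) (hfv : f v ≠ 0) :
    Module.finrank R ↥(M ⊓ LinearMap.ker f) < Module.finrank R M := by
  have hker : Module.finrank R ↥(M ⊓ LinearMap.ker f) =
      Module.finrank R (LinearMap.ker (f.domRestrict M)) := by
    rw [LinearMap.ker_domRestrict, ← Submodule.map_comap_subtype, Submodule.finrank_map_subtype_eq]
  have hrange : 0 < Module.finrank R (LinearMap.range (f.domRestrict M)) :=
    Module.finrank_pos_iff_exists_ne_zero.2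
      ⟨⟨f v, ⟨v, hv⟩, rfl⟩, fun h => hfv (congrArg Subtype.val h)⟩
  have := finrank_range_add_finrank_ker_of_hasRankNullity (f.domRestrict M)
  omega

theorem card_le_pow_finrank {R : Type*} [CommRing R] [IsDomain R] [IsNoetherianRing R] [Finite J]
    {M : Submodule R (J → R)} {X : Finset R} (hX : X.Nonempty) {d : ℕ}
    (hM : Module.finrank R M ≤ d) {S : Finset (J → R)} (hSX : ∀ x ∈ S, ∀ j, x j ∈ X)
    (hSM : ∀ x ∈ S, ∀ y ∈ S, x - y ∈ M) : #S ≤ #X ^ d := by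
  induction d generalizing M S with
  | zero =>
    have hbot : M = ⊥ := Submodule.finrank_eq_zero.1 (by omega)
    rw [pow_zero, Finset.card_le_one]
    exact fun x hx y hy => sub_eq_zero.1 (by simpa [hbot] using hSM x hx y hy)
  | succ d ih =>
    rcases eq_or_ne M ⊥ with rfl | hbot
    · exact (ih (by simp) hSX hSM).trans (Nat.pow_le_pow_right hX.card_pos (by omega))
    obtain ⟨u, huM, hu⟩ := Submodule.exists_mem_ne_zero_of_ne_bot hbot
    obtain ⟨j, hj⟩ := Function.ne_iff.1 hu
    have hlt := finrank_inf_ker_lt (f := LinearMap.proj j) huM hj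
    have hfibre : ∀ a ∈ S.image (fun x => x j), #{x ∈ S | x j = a} ≤ #X ^ d := by
      refine fun a _ => ih (M := M ⊓ LinearMap.ker (LinearMap.proj j)) (by omega)
        (fun x hx => hSX x (mem_filter.1 hx).1) fun x hx y hy => ?_
      rw [mem_filter] at hx hy
      exact ⟨hSM x hx.1 y hy.1, by simp [hx.2, hy.2]⟩
    calc #S ≤ #X ^ d * #(S.image fun x => x j) := Finset.card_le_mul_card_image _ _ hfibre
      _ ≤ #X ^ d * #X := by
        gcongr
        exact Finset.image_subset_iff.2 fun x hx => hSX x hx j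
      _ = #X ^ (d + 1) := (pow_succ _ _).symm

theorem exists_box_subset [Finite J] (M : Submodule ℤ (J → ℤ)) : ∃ V : ℕ, ∀ L : ℕ,
    ∃ B : Finset (J → ℤ), #B = L ^ Module.finrank ℤ M ∧ ∀ x ∈ B, x ∈ M ∧ ∀ j, |x j| ≤ L * V := by
  have := Fintype.ofFinite J
  let b := Module.finBasis ℤ M
  refine ⟨∑ j, ∑ i, ((b i).1 j).natAbs, fun L => ?_⟩
  let combine : (Fin (Module.finrank ℤ M) → Fin L) → J → ℤ :=
    fun c => (b.equivFun.symm fun i => (c i : ℤ)).1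
  have hinj : Function.Injective combine := by
    intro c c' h
    funext i
    have := congrFun (b.equivFun.symm.injective (Subtype.ext h)) i
    exact Fin.ext (by exact_mod_cast this)
  refine ⟨univ.image combine, by simp [card_image_of_injective _ hinj], ?_⟩
  simp only [mem_image, mem_univ, true_and, forall_exists_index, forall_apply_eq_imp_iff]
  refine fun c => ⟨Subtype.prop _, fun j => ?_⟩
  calc |combine c j| = |∑ i, (c i : ℤ) * (b i).1 j| := by
        simp [combine, Module.Basis.equivFun_symm_apply]
    _ ≤ ∑ i, |(c i : ℤ) * (b i).1 j| := abs_sum_le_sum_abs _ _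
    _ ≤ ∑ i, (L : ℤ) * |(b i).1 j| := by
        refine sum_le_sum fun i _ => ?_
        rw [abs_mul, Nat.abs_cast]
        gcongr
        exact_mod_cast (c i).2.le
    _ ≤ L * ((∑ j, ∑ i, ((b i).1 j).natAbs : ℕ) : ℤ) := by
        rw [← mul_sum]
        push_cast
        gcongr
        exact single_le_sum (f := fun j => ∑ i, |(b i).1 j|) (fun _ _ => by positivity) (mem_univ j)

theorem const_add_sum_line_mem {ι : Type*} [Fintype ι] {M : Submodule ℤ (J → ℤ)}
    (hM : 1 ∈ M) {g : ι → J → ℤ} (hg : ∀ s, g s ∈ M) (a : ℤ) (ℓ : Line J ι) :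
    (fun j => a + ∑ s, g s (ℓ j s)) ∈ M := by
  have hconst : ∀ c : ℤ, (fun _ => c) ∈ M := fun c => by
    convert M.smul_mem c hM using 1
    ext
    simp
  have hcoord : ∀ s, (fun j => g s (ℓ j s)) ∈ M := by
    intro s
    cases hs : ℓ.idxFun s with
    | none => simpa [Line.apply_def, hs] using hg s
    | some i => simpa [Line.apply_def, hs] using hconst (g s i)
  convert M.add_mem (hconst a) (M.sum_mem fun s (_ : s ∈ univ) => hcoord s) using 1
  ext
  simp

variable [Fintype J]

/-- The points of the lattice `M ≤ ℤ^J` all of whose coordinates lie in `F`. When `M` is the kernel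
of an integer matrix, these are the solutions in `F` of the corresponding linear system. -/
noncomputable def latticePoints (M : Submodule ℤ (J → ℤ)) (F : Finset ℤ) : Finset (J → ℤ) :=
  {x ∈ Fintype.piFinset fun _ => F | x ∈ M}

theorem mem_latticePoints {M : Submodule ℤ (J → ℤ)} {F : Finset ℤ} {x : J → ℤ} :
    x ∈ latticePoints M F ↔ (∀ j, x j ∈ F) ∧ x ∈ M := by
  simp [latticePoints]

theorem card_latticePoints_le {M : Submodule ℤ (J → ℤ)} {F : Finset ℤ} (hF : F.Nonempty) :
    #(latticePoints M F) ≤ #F ^ Module.finrank ℤ M :=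
  card_le_pow_finrank hF le_rfl (fun _ hx => (mem_latticePoints.1 hx).1) fun _ hx _ hy =>
    M.sub_mem (mem_latticePoints.1 hx).2 (mem_latticePoints.1 hy).2

theorem card_not_injective_latticePoints_le {M : Submodule ℤ (J → ℤ)}
    (hM : ∀ i j, i ≠ j → ∃ x ∈ M, x i ≠ x j) {F : Finset ℤ} (hF : F.Nonempty) :
    #{x ∈ latticePoints M F | ¬ Function.Injective x} ≤
      Fintype.card J ^ 2 * #F ^ (Module.finrank ℤ M - 1) := by
  let diff (p : J × J) : (J → ℤ) →ₗ[ℤ] ℤ :=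
    LinearMap.proj (R := ℤ) (φ := fun _ => ℤ) p.1 - LinearMap.proj p.2
  let diag (p : J × J) : Submodule ℤ (J → ℤ) := M ⊓ LinearMap.ker (diff p)
  have hdiag : ∀ p ∈ ({p | p.1 ≠ p.2} : Finset (J × J)),
      #(latticePoints (diag p) F) ≤ #F ^ (Module.finrank ℤ M - 1) := by
    rintro ⟨i, j⟩ hij
    obtain ⟨x, hx, hxij⟩ := hM i j (mem_filter.1 hij).2
    have hlt := finrank_inf_ker_lt (f := diff (i, j)) hx (by simpa [diff, sub_eq_zero] using hxij)
    exact (card_latticePoints_le hF).trans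
      (Nat.pow_le_pow_right hF.card_pos (Nat.le_sub_one_of_lt hlt))
  have hcover : {x ∈ latticePoints M F | ¬ Function.Injective x} ⊆
      ({p | p.1 ≠ p.2} : Finset (J × J)).biUnion fun p => latticePoints (diag p) F := by
    intro x hx
    obtain ⟨hx, hinj⟩ := mem_filter.1 hx
    obtain ⟨i, j, hij, hne⟩ := Function.not_injective_iff.1 hinj
    rw [mem_latticePoints] at hx
    simp only [mem_biUnion, mem_filter, mem_univ, true_and, mem_latticePoints]
    exact ⟨(i, j), hne, hx.1, hx.2, by simp [diff, hij]⟩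
  calc #{x ∈ latticePoints M F | ¬ Function.Injective x}
      ≤ #({p | p.1 ≠ p.2} : Finset (J × J)) * #F ^ (Module.finrank ℤ M - 1) :=
        (card_le_card hcover).trans (card_biUnion_le_card_mul _ _ _ hdiag)
    _ ≤ Fintype.card J ^ 2 * #F ^ (Module.finrank ℤ M - 1) := by
        gcongr
        simpa [sq] using card_le_univ ({p | p.1 ≠ p.2} : Finset (J × J))

variable {ι : Type*} [Fintype ι]

theorem card_le_add_card_translates [Nonempty J] {δ : ℝ} (hδ : 0 ≤ δ)
    (hline : ∀ A : Set (ι → J), δ ≤ density A → ∃ ℓ : Line J ι, ∀ j, ℓ j ∈ A)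
    {n : ℕ} {F : Finset ℤ} (hF : F ⊆ Icc 1 (n : ℤ)) {X : (ι → J) → ℤ} (hX : ∀ w, |X w| ≤ n) :
    (#F : ℝ) ≤ δ * (3 * n + 1) +
      #{a ∈ Icc (-n : ℤ) (2 * n) | ∃ ℓ : Line J ι, ∀ j, a + X (ℓ j) ∈ F} := by
  have htranslate : ∀ w,
      ∑ a ∈ Icc (-n : ℤ) (2 * n), {w | a + X w ∈ F}.indicator (1 : (ι → J) → ℝ) w = #F := by
    intro w
    simp only [Set.indicator_apply, Set.mem_ofPred_eq, Pi.one_apply, sum_boole, Nat.cast_inj]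
    refine card_bij (fun a _ => a + X w) (fun a ha => (mem_filter.1 ha).2)
      (fun _ _ _ _ h => add_right_cancel h) fun f hf => ⟨f - X w, ?_, sub_add_cancel _ _⟩
    have hf' := mem_Icc.1 (hF hf)
    have := abs_le.1 (hX w)
    simp only [mem_filter, mem_Icc, sub_add_cancel]
    exact ⟨by omega, hf⟩
  have hdensity : ∀ a, density {w | a + X w ∈ F} ≤
      δ + if ∃ ℓ : Line J ι, ∀ j, a + X (ℓ j) ∈ F then 1 else 0 := by
    intro a
    split_ifs with h
    · linarith [density_le_one {w | a + X w ∈ F}]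
    · rw [add_zero]
      exact le_of_not_ge fun hA => h (hline _ hA)
  have hcard : #(Icc (-n : ℤ) (2 * n)) = 3 * n + 1 := by
    rw [Int.card_Icc]
    omega
  calc (#F : ℝ) = ∑ a ∈ Icc (-n : ℤ) (2 * n), density {w | a + X w ∈ F} := by
        simp only [density, ← expect_sum_comm, htranslate, expect_const univ_nonempty]
    _ ≤ _ := sum_le_sum fun a _ => hdensity a
    _ = _ := by
        rw [sum_add_distrib, sum_const, hcard, sum_boole, nsmul_eq_mul]
        push_cast
        ring

theorem card_line_pairs_le {M : Submodule ℤ (J → ℤ)} (hM : 1 ∈ M) {B : Finset (J → ℤ)}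
    (hB : ∀ x ∈ B, x ∈ M) (F I : Finset ℤ) (ℓ : Line J ι) :
    #{p ∈ I ×ˢ Fintype.piFinset fun _ : ι => B | ∀ j, p.1 + ∑ s, p.2 s (ℓ j s) ∈ F} ≤
      #I * #(latticePoints M F) * #B ^ (Fintype.card ι - 1) := by
  obtain ⟨s₀, hs₀⟩ := ℓ.proper
  have hℓ : ∀ j, ℓ j s₀ = j := fun j => ℓ.apply_none j s₀ hs₀
  let target := I ×ˢ latticePoints M F ×ˢ Fintype.piFinset fun _ : {s // s ≠ s₀} => B
  have htarget : #target = #I * #(latticePoints M F) * #B ^ (Fintype.card ι - 1) := by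
    simp [target, mul_assoc, Fintype.card_subtype_compl]
  rw [← htarget]
  refine card_le_card_of_injOn
    (fun p => (p.1, (fun j => p.1 + ∑ s, p.2 s (ℓ j s)), fun s => p.2 s)) ?_ ?_
  · rintro ⟨a, g⟩ hp
    simp only [coe_filter, mem_product, Fintype.mem_piFinset, Set.mem_ofPred_eq] at hp
    simp only [target, mem_coe, mem_product, mem_latticePoints, Fintype.mem_piFinset]
    exact ⟨hp.1.1, ⟨hp.2,
      const_add_sum_line_mem hM (fun s => hB _ (hp.1.2 s)) a ℓ⟩, fun s => hp.1.2 s⟩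
  · rintro ⟨a, g⟩ - ⟨a', g'⟩ - heq
    simp only [Prod.mk.injEq] at heq
    obtain ⟨rfl, hsum, hrest⟩ := heq
    have hne : ∀ s ≠ s₀, g s = g' s := fun s hs => congrFun hrest ⟨s, hs⟩
    have hs₀ : g s₀ = g' s₀ := by
      funext j
      have hj := congrFun hsum j
      rw [add_right_inj, Fintype.sum_eq_add_sum_compl s₀, Fintype.sum_eq_add_sum_compl s₀,
        sum_congr rfl fun s hs => by rw [hne s (by simpa using hs)], hℓ] at hj
      exact add_right_cancel hj
    congr 1
    funext s
    by_cases hs : s = s₀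
    · rw [hs, hs₀]
    · exact hne s hs

theorem card_filter_exists_le {α κ : Type*} [Finite κ] {s : Finset α} {p : κ → α → Prop} {c : ℕ}
    (h : ∀ i, #{a ∈ s | p i a} ≤ c) : #{a ∈ s | ∃ i, p i a} ≤ Nat.card κ * c := by
  rw [← Set.ncard_univ, Set.ncard_eq_toFinset_card _ Set.finite_univ]
  refine (card_le_card fun a ha => ?_).trans (card_biUnion_le_card_mul _ _ c fun i _ => h i)
  simpa using ha

theorem sum_card_translates_le {M : Submodule ℤ (J → ℤ)} (hM : 1 ∈ M) {B : Finset (J → ℤ)}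
    (hB : ∀ x ∈ B, x ∈ M) (F I : Finset ℤ) :
    ∑ g ∈ Fintype.piFinset fun _ : ι => B,
        #{a ∈ I | ∃ ℓ : Line J ι, ∀ j, a + ∑ s, g s (ℓ j s) ∈ F} ≤
      Nat.card (Line J ι) * (#I * #(latticePoints M F) * #B ^ (Fintype.card ι - 1)) := by
  set G := Fintype.piFinset fun _ : ι => B
  have hpairs : ∑ g ∈ G, #{a ∈ I | ∃ ℓ : Line J ι, ∀ j, a + ∑ s, g s (ℓ j s) ∈ F} =
      #{p ∈ I ×ˢ G | ∃ ℓ : Line J ι, ∀ j, p.1 + ∑ s, p.2 s (ℓ j s) ∈ F} := by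
    simp only [card_filter, sum_product_right]
  rw [hpairs]
  exact card_filter_exists_le fun ℓ => by convert card_line_pairs_le hM hB F I ℓ

theorem card_box_mul_le [Nonempty J] [Nonempty ι] {δ : ℝ} (hδ : 0 ≤ δ)
    (hline : ∀ A : Set (ι → J), δ ≤ density A → ∃ ℓ : Line J ι, ∀ j, ℓ j ∈ A)
    {M : Submodule ℤ (J → ℤ)} (hM : 1 ∈ M) {B : Finset (J → ℤ)} (hB : B.Nonempty) {b n : ℕ}
    (hBb : ∀ x ∈ B, x ∈ M ∧ ∀ j, |x j| ≤ b) (hbn : Fintype.card ι * b ≤ n)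
    {F : Finset ℤ} (hF : F ⊆ Icc 1 (n : ℤ)) :
    #B * (#F - δ * (3 * n + 1)) ≤
      Nat.card (Line J ι) * (3 * n + 1) * #(latticePoints M F) := by
  let G := Fintype.piFinset fun _ : ι => B
  have hG : (#G : ℝ) = #B * #B ^ (Fintype.card ι - 1) := by
    rw [Fintype.card_piFinset, prod_const, card_univ, Nat.cast_pow,
      mul_pow_sub_one Fintype.card_ne_zero]
  have hlower : ∀ g ∈ G, (#F : ℝ) - δ * (3 * n + 1) ≤
      #{a ∈ Icc (-n : ℤ) (2 * n) | ∃ ℓ : Line J ι, ∀ j, a + ∑ s, g s (ℓ j s) ∈ F} := by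
    intro g hg
    have hX : ∀ w : ι → J, |∑ s, g s (w s)| ≤ n := fun w => by
      calc |∑ s, g s (w s)| ≤ ∑ s, |g s (w s)| := abs_sum_le_sum_abs _ _
        _ ≤ #(univ : Finset ι) • (b : ℤ) := sum_le_card_nsmul _ _ _ fun s _ =>
          (hBb _ (Fintype.mem_piFinset.1 hg s)).2 (w s)
        _ ≤ n := by
          rw [card_univ, nsmul_eq_mul]
          exact_mod_cast hbn
    exact sub_left_le_of_le_add
      (card_le_add_card_translates (X := fun w => ∑ s, g s (w s)) hδ hline hF hX)
  have hupper := sum_card_translates_le (ι := ι) hM (fun x hx => (hBb x hx).1) F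
    (Icc (-n : ℤ) (2 * n))
  rw [Int.card_Icc, show (2 * (n : ℤ) + 1 - -n).toNat = 3 * n + 1 by omega] at hupper
  refine le_of_mul_le_mul_right ?_ (pow_pos (Nat.cast_pos.2 hB.card_pos) (Fintype.card ι - 1))
  calc #B * (#F - δ * (3 * n + 1)) * (#B : ℝ) ^ (Fintype.card ι - 1)
      = ∑ g ∈ G, ((#F : ℝ) - δ * (3 * n + 1)) := by
        rw [sum_const, nsmul_eq_mul, hG]
        ring
    _ ≤ _ := sum_le_sum hlower
    _ ≤ _ := by exact_mod_cast Nat.cast_le.2 hupper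
    _ = _ := by
        push_cast
        ring

theorem card_box_mul_half_le [Nonempty J] [Nonempty ι] {δ : ℝ} (hδ : 0 ≤ δ)
    (hline : ∀ A : Set (ι → J), δ / 8 ≤ density A → ∃ ℓ : Line J ι, ∀ j, ℓ j ∈ A)
    {M : Submodule ℤ (J → ℤ)} (hM : 1 ∈ M) {B : Finset (J → ℤ)} (hB : B.Nonempty) {b n : ℕ}
    (hBb : ∀ x ∈ B, x ∈ M ∧ ∀ j, |x j| ≤ b) (hbn : Fintype.card ι * b ≤ n) (hn : 1 ≤ n)
    {F : Finset ℤ} (hF : F ⊆ Icc 1 (n : ℤ)) (hFδ : δ * n ≤ #F) :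
    #B * (δ / 2) ≤ 4 * Nat.card (Line J ι) * #(latticePoints M F) := by
  have hn1 : (1 : ℝ) ≤ n := Nat.one_le_cast.2 hn
  refine le_of_mul_le_mul_right ?_ (zero_lt_one.trans_le hn1)
  calc (#B : ℝ) * (δ / 2) * n ≤ #B * (#F - δ / 8 * (3 * n + 1)) := by
        rw [mul_assoc]
        gcongr
        nlinarith
    _ ≤ Nat.card (Line J ι) * (3 * n + 1) * #(latticePoints M F) :=
        card_box_mul_le (by positivity) hline hM hB hBb hbn hF
    _ ≤ Nat.card (Line J ι) * (4 * n) * #(latticePoints M F) := by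
        gcongr
        linarith
    _ = 4 * Nat.card (Line J ι) * #(latticePoints M F) * n := by ring

theorem exists_mul_pow_le_card_latticePoints [Nonempty J] {M : Submodule ℤ (J → ℤ)} (hM : 1 ∈ M)
    {δ : ℝ} (hδ : 0 < δ) :
    ∃ c : ℝ, 0 < c ∧ ∃ n₀ : ℕ, ∀ n : ℕ, n₀ ≤ n → ∀ F ⊆ Icc (1 : ℤ) n, δ * n ≤ #F →
      c * n ^ Module.finrank ℤ M ≤ #(latticePoints M F) := by
  obtain ⟨N, hN⟩ := densityHalesJewett J (δ / 8) (by positivity)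
  obtain ⟨ι, _, hι⟩ : ∃ (ι : Type) (_ : Fintype ι), Fintype.card ι = N + 1 :=
    ⟨Fin (N + 1), inferInstance, Fintype.card_fin _⟩
  have : Nonempty ι := Fintype.card_pos_iff.1 (by omega)
  obtain ⟨V, hV⟩ := exists_box_subset M
  let Q := (N + 1) * V + 1
  let K := Nat.card (Line J ι)
  have hK : 0 < K := Nat.card_pos
  refine ⟨δ / (8 * K) * (1 / (2 * Q)) ^ Module.finrank ℤ M, by positivity, Q,
    fun n hn F hF hFδ => ?_⟩
  let L := n / Q
  have hL : 1 ≤ L := (Nat.one_le_div_iff (by omega)).2 hn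
  have hLQ : L * Q ≤ n := Nat.div_mul_le_self n Q
  have hnL : (n : ℝ) * (1 / (2 * Q)) ≤ L := by
    have : n < Q * (L + 1) := Nat.lt_mul_div_succ n (by omega)
    rw [mul_one_div, div_le_iff₀ (by positivity)]
    exact_mod_cast (show n ≤ L * (2 * Q) by nlinarith)
  have hLV : Fintype.card ι * (L * V) ≤ n := by
    have : L * Q = (N + 1) * (L * V) + L := by
      simp only [Q]
      ring
    rw [hι]
    omega
  obtain ⟨B, hBcard, hB⟩ := hV L
  have hbound : (#B : ℝ) * (δ / 2) ≤ 4 * K * #(latticePoints M F) :=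
    card_box_mul_half_le hδ.le (hN ι (by omega)) hM (card_pos.1 (hBcard ▸ by positivity))
      (mod_cast hB) hLV (by omega) hF hFδ
  calc δ / (8 * K) * (1 / (2 * Q)) ^ Module.finrank ℤ M * n ^ Module.finrank ℤ M
      = δ / (8 * K) * (n * (1 / (2 * Q))) ^ Module.finrank ℤ M := by
        rw [mul_pow]
        ring
    _ ≤ δ / (8 * K) * L ^ Module.finrank ℤ M := by gcongr
    _ ≤ #(latticePoints M F) := by
        rw [div_mul_eq_mul_div, div_le_iff₀ (by positivity), ← Nat.cast_pow, ← hBcard]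
        linarith

theorem exists_mul_pow_le_card_injective_latticePoints [Nonempty J] {M : Submodule ℤ (J → ℤ)}
    (hM : 1 ∈ M) (hne : ∀ i j, i ≠ j → ∃ x ∈ M, x i ≠ x j) {δ : ℝ} (hδ : 0 < δ) :
    ∃ c : ℝ, 0 < c ∧ ∃ n₀ : ℕ, ∀ n : ℕ, n₀ ≤ n → ∀ F ⊆ Icc (1 : ℤ) n, δ * n ≤ #F →
      c * n ^ Module.finrank ℤ M ≤ #{x ∈ latticePoints M F | Function.Injective x} := by
  obtain ⟨c, hc, n₀, h⟩ := exists_mul_pow_le_card_latticePoints hM hδ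
  have hrank : 0 < Module.finrank ℤ M := Module.finrank_pos_iff_exists_ne_zero.2
    ⟨⟨1, hM⟩, fun h => one_ne_zero (congrArg Subtype.val h)⟩
  obtain ⟨d, hd⟩ := Nat.exists_eq_add_one.2 hrank
  refine ⟨c / 2, by positivity, max (n₀ + 1) ⌈2 * Fintype.card J ^ 2 / c⌉₊,
    fun n hn F hF hFδ => ?_⟩
  have hn' : 2 * (Fintype.card J : ℝ) ^ 2 / c ≤ n :=
    (Nat.le_ceil _).trans (Nat.cast_le.2 (le_of_max_le_right hn))
  have hn0 : (0 : ℝ) < n := by exact_mod_cast (show 0 < n by omega)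
  have hFne : F.Nonempty := card_pos.1 (by exact_mod_cast (by positivity : 0 < δ * n).trans_le hFδ)
  have hFn : #F ≤ n := by simpa using card_le_card hF
  have hnoninj : (#{x ∈ latticePoints M F | ¬ Function.Injective x} : ℝ) ≤ c / 2 * n ^ (d + 1) :=
    calc (#{x ∈ latticePoints M F | ¬ Function.Injective x} : ℝ)
        ≤ Fintype.card J ^ 2 * #F ^ d := by
          have := card_not_injective_latticePoints_le hne hFne
          rw [hd, Nat.add_sub_cancel] at this
          exact_mod_cast this
      _ ≤ (c / 2 * n) * n ^ d := by
          rw [div_le_iff₀ hc] at hn'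
          gcongr
          linarith
      _ = c / 2 * n ^ (d + 1) := by ring
  have hsplit : (#(latticePoints M F) : ℝ) = #{x ∈ latticePoints M F | Function.Injective x} +
      #{x ∈ latticePoints M F | ¬ Function.Injective x} := by
    exact_mod_cast (card_filter_add_card_filter_not _).symm
  have := h n (by omega) F hF hFδ
  rw [hd] at this ⊢
  linarith

end LatticePoints

section MatrixKernels

variable {R : Type*} [CommRing R]

theorem finrank_span_of_isFractionRing {V : Type*} (K : Type*) [Field K] [Algebra R K]
    [IsFractionRing R K] [AddCommGroup V] [Module R V] [Module K V] [IsScalarTower R K V]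
    (s : Set V) :
    Module.finrank K (Submodule.span K s) = Module.finrank R (Submodule.span R s) := by
  have := isLocalizedModule_id (nonZeroDivisors R) V K
  have hspan := Submodule.localized'_span K (nonZeroDivisors R) (LinearMap.id : V →ₗ[R] V) s
  rw [LinearMap.id_coe, Set.image_id] at hspan
  rw [← hspan, IsLocalization.finrank_eq K (nonZeroDivisors R) le_rfl]
  exact IsLocalizedModule.finrank_eq (nonZeroDivisors R)
    (Submodule.toLocalized' K (nonZeroDivisors R) LinearMap.id (Submodule.span R s)) le_rfl

theorem rank_map_algebraMap {ι κ K : Type*} [Fintype κ] [Field K] [Algebra R K]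
    [IsFractionRing R K] (A : Matrix ι κ R) : (A.map (algebraMap R K)).rank = A.rank := by
  let coord : (ι → R) →ₗ[R] (ι → K) := (Algebra.linearMap R K).compLeft ι
  have hcoord : Function.Injective coord := (IsFractionRing.injective R K).comp_left
  have hspan : Submodule.span R (Set.range (A.map (algebraMap R K)).col) =
      (Submodule.span R (Set.range A.col)).map coord := by
    rw [Submodule.map_span, ← Set.range_comp]
    rfl
  rw [Matrix.rank_eq_finrank_span_cols, Matrix.rank_eq_finrank_span_cols,
    finrank_span_of_isFractionRing (R := R), hspan,
    (Submodule.equivMapOfInjective coord hcoord _).finrank_eq]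

variable [IsDomain R] {ι κ : Type*} [Fintype κ]

theorem finrank_ker_mulVecLin (A : Matrix ι κ R) :
    Module.finrank R (LinearMap.ker A.mulVecLin) = Fintype.card κ - A.rank := by
  have := finrank_range_add_finrank_ker_of_hasRankNullity A.mulVecLin
  rw [Module.finrank_fintype_fun_eq_card] at this
  exact Nat.eq_sub_of_add_eq' this

theorem finrank_ker_inf_ker_funLeft_le [IsNoetherianRing R] (A : Matrix ι κ R) (B : Finset κ) :
    Module.finrank R ↥(LinearMap.ker A.mulVecLin ⊓
        LinearMap.ker (LinearMap.funLeft R R ((↑) : {j // j ∈ B} → κ))) ≤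
      Fintype.card κ - #B - (A.submatrix id ((↑) : {j // j ∉ B} → κ)).rank := by
  have hcard : Fintype.card κ - #B = Fintype.card {j // j ∉ B} := by
    rw [Fintype.card_subtype_compl, Fintype.card_coe]
  rw [hcard, ← finrank_ker_mulVecLin]
  have hmem : ∀ x ∈ LinearMap.ker A.mulVecLin ⊓
      LinearMap.ker (LinearMap.funLeft R R ((↑) : {j // j ∈ B} → κ)),
      LinearMap.funLeft R R ((↑) : {j // j ∉ B} → κ) x ∈
        LinearMap.ker (A.submatrix id ((↑) : {j // j ∉ B} → κ)).mulVecLin := by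
    rintro x ⟨hA, hB⟩
    funext i
    have hsum := Fintype.sum_subtype_add_sum_subtype (fun j => j ∈ B) fun j => A i j * x j
    rw [sum_eq_zero fun j _ => by rw [show x j = 0 from congrFun hB j, mul_zero], zero_add] at hsum
    exact hsum.trans (congrFun hA i)
  refine LinearMap.finrank_le_finrank_of_injective (f := LinearMap.restrict _ hmem) ?_
  rintro ⟨x, _, hx⟩ ⟨y, _, hy⟩ hxy
  refine Subtype.ext (funext fun j => ?_)
  by_cases hj : j ∈ B
  · exact (congrFun hx ⟨j, hj⟩).trans (congrFun hy ⟨j, hj⟩).symm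
  · exact congrFun (congrArg Subtype.val hxy) ⟨j, hj⟩

theorem card_filter_eq_on_latticePoints_le {F : Finset ℤ} (hF : F.Nonempty) (A : Matrix ι κ ℤ)
    (B : Finset κ) (b : κ → ℤ) :
    #{x ∈ latticePoints (LinearMap.ker A.mulVecLin) F | ∀ j ∈ B, x j = b j} ≤
      #F ^ (Fintype.card κ - #B - (A.submatrix id ((↑) : {j // j ∉ B} → κ)).rank) := by
  set S := {x ∈ latticePoints (LinearMap.ker A.mulVecLin) F | ∀ j ∈ B, x j = b j}
  have hmem : ∀ x ∈ S, (∀ j, x j ∈ F) ∧ x ∈ LinearMap.ker A.mulVecLin ∧ ∀ j ∈ B, x j = b j := by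
    intro x hx
    rwa [mem_filter, mem_latticePoints, and_assoc] at hx
  have hdiff : ∀ x ∈ S, ∀ y ∈ S, x - y ∈ LinearMap.ker A.mulVecLin ⊓
      LinearMap.ker (LinearMap.funLeft ℤ ℤ ((↑) : {j // j ∈ B} → κ)) := fun x hx y hy =>
    ⟨sub_mem (hmem x hx).2.1 (hmem y hy).2.1, funext fun j =>
      sub_eq_zero.2 (((hmem x hx).2.2 j j.2).trans ((hmem y hy).2.2 j j.2).symm)⟩
  exact card_le_pow_finrank hF (finrank_ker_inf_ker_funLeft_le A B) (fun x hx => (hmem x hx).1)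
    hdiff

theorem rank_le_rank_submatrix_notMem_singleton {A : Matrix ι κ R} (hA : ∀ i, ∑ j, A i j = 0)
    (j₀ : κ) : A.rank ≤ (A.submatrix id ((↑) : {j // j ∉ ({j₀} : Finset κ)} → κ)).rank := by
  set A' := A.submatrix id ((↑) : {j // j ∉ ({j₀} : Finset κ)} → κ)
  have hcol : ∀ j ≠ j₀, A.col j ∈ Submodule.span R (Set.range A'.col) := fun j hj =>
    Submodule.subset_span ⟨⟨j, notMem_singleton.2 hj⟩, rfl⟩
  have hsum : A.col j₀ = -∑ j ∈ univ.erase j₀, A.col j := by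
    rw [eq_neg_iff_add_eq_zero, add_sum_erase _ _ (mem_univ j₀)]
    funext i
    rw [Finset.sum_apply]
    exact hA i
  have := Module.Finite.span_of_finite R (Set.finite_range A'.col)
  rw [Matrix.rank_eq_finrank_span_cols, Matrix.rank_eq_finrank_span_cols]
  refine Submodule.finrank_mono (Submodule.span_le.2 ?_)
  rintro _ ⟨j, rfl⟩
  by_cases hj : j = j₀
  · rw [hj, hsum]
    exact neg_mem (sum_mem fun j hj => hcol j (ne_of_mem_erase hj))
  · exact hcol j hj

end MatrixKernels

section Containers

variable {α : Type*}

/-- `HasContainers 𝓘 s b`: a container algorithm for the family `𝓘`. Each `I ∈ 𝓘` has a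
fingerprint `S I ⊆ I` of size at most `s` and a container `C I ⊇ I` of size at most `b`; the last
clause says that neither changes when `I` is shrunk to a set containing `S I`, so that `C I` depends
on `S I` only. -/
def HasContainers (𝓘 : Set (Finset α)) (s b : ℝ) : Prop :=
  ∃ S C : Finset α → Finset α, ∀ I ∈ 𝓘, S I ⊆ I ∧ #(S I) ≤ s ∧ I ⊆ C I ∧ #(C I) ≤ b ∧
    ∀ J, S I ⊆ J → J ⊆ I → S J = S I ∧ C J = C I

theorem HasContainers.mono {𝓘 𝓘' : Set (Finset α)} {s s' b b' : ℝ} (h : HasContainers 𝓘 s b)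
    (h𝓘 : 𝓘' ⊆ 𝓘) (hs : s ≤ s') (hb : b ≤ b') : HasContainers 𝓘' s' b' := by
  obtain ⟨S, C, hSC⟩ := h
  refine ⟨S, C, fun I hI => ?_⟩
  obtain ⟨hSI, hS, hIC, hC, hJ⟩ := hSC I (h𝓘 hI)
  exact ⟨hSI, hS.trans hs, hIC, hC.trans hb, hJ⟩

theorem hasContainers_of_forall_subset {𝓘 : Set (Finset α)} {s b : ℝ} {C : Finset α} (hs : 0 ≤ s)
    (h𝓘 : ∀ I ∈ 𝓘, I ⊆ C) (hC : #C ≤ b) : HasContainers 𝓘 s b :=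
  ⟨fun _ => ∅, fun _ => C, fun I hI =>
    ⟨empty_subset I, by simpa using hs, h𝓘 I hI, hC, fun _ _ _ => ⟨rfl, rfl⟩⟩⟩

theorem HasContainers.of_mem_of_notMem {𝓘 : Set (Finset α)} {s b : ℝ} {v : α}
    (hmem : HasContainers (𝓘 ∩ {I | v ∈ I}) s b)
    (hnotMem : HasContainers (𝓘 ∩ {I | v ∉ I}) (s + 1) b) : HasContainers 𝓘 (s + 1) b := by
  obtain ⟨S, C, hSC⟩ := hmem
  obtain ⟨S', C', hSC'⟩ := hnotMem
  refine ⟨fun I => if v ∈ I then insert v (S I) else S' I, fun I => if v ∈ I then C I else C' I,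
    fun I hI => ?_⟩
  by_cases hv : v ∈ I
  · obtain ⟨hSI, hS, hIC, hC, hJ⟩ := hSC I ⟨hI, hv⟩
    simp only [hv, if_true]
    refine ⟨insert_subset hv hSI, ?_, hIC, hC, fun J hSJ hJI => ?_⟩
    · calc (#(insert v (S I)) : ℝ) ≤ #(S I) + 1 := mod_cast card_insert_le v (S I)
        _ ≤ s + 1 := by gcongr
    · obtain ⟨hvJ, hSJ⟩ := insert_subset_iff.1 hSJ
      simp only [hvJ, if_true, hJ J hSJ hJI, and_self]
  · obtain ⟨hSI, hS, hIC, hC, hJ⟩ := hSC' I ⟨hI, hv⟩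
    simp only [hv, if_false]
    refine ⟨hSI, hS, hIC, hC, fun J hSJ hJI => ?_⟩
    have hvJ : v ∉ J := fun h => hv (hJI h)
    simp only [hvJ, if_false, hJ J hSJ hJI, and_self]

theorem HasContainers.of_forall_mem {𝓘 : Set (Finset α)} {s b : ℝ} {H : Finset α}
    (hmem : ∀ v ∈ H, HasContainers (𝓘 ∩ {I | v ∈ I}) s b)
    (hdisj : HasContainers (𝓘 ∩ {I | Disjoint I H}) (s + 1) b) : HasContainers 𝓘 (s + 1) b := by
  induction H using Finset.induction_on generalizing 𝓘 with
  | empty => simpa using hdisj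
  | insert v H _ ih =>
    rw [forall_mem_insert] at hmem
    refine .of_mem_of_notMem hmem.1 (ih (fun u hu => ?_) ?_)
    · exact (hmem.2 u hu).mono (Set.inter_subset_inter_left _ Set.inter_subset_left) le_rfl le_rfl
    · refine hdisj.mono ?_ le_rfl le_rfl
      rintro I ⟨⟨hI, hv⟩, hIH⟩
      exact ⟨hI, disjoint_insert_right.2 ⟨hv, hIH⟩⟩

theorem HasContainers.bind {𝓘 : Set (Finset α)} {s s' b b' : ℝ} (h : HasContainers 𝓘 s b)
    (h' : ∀ C : Finset α, #C ≤ b → HasContainers (𝓘 ∩ {I | I ⊆ C}) s' b') :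
    HasContainers 𝓘 (s + s') b' := by
  obtain ⟨S, C, hSC⟩ := h
  have hbranch : ∀ D : Finset α, ∃ S' C' : Finset α → Finset α, #D ≤ b →
      ∀ I ∈ 𝓘 ∩ {I | I ⊆ D}, S' I ⊆ I ∧ #(S' I) ≤ s' ∧ I ⊆ C' I ∧ #(C' I) ≤ b' ∧
        ∀ J, S' I ⊆ J → J ⊆ I → S' J = S' I ∧ C' J = C' I := by
    intro D
    by_cases hD : (#D : ℝ) ≤ b
    · obtain ⟨S', C', hSC'⟩ := h' D hD
      exact ⟨S', C', fun _ => hSC'⟩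
    · exact ⟨id, id, fun h => absurd h hD⟩
  choose S' C' hSC' using hbranch
  refine ⟨fun I => S I ∪ S' (C I) I, fun I => C' (C I) I, fun I hI => ?_⟩
  obtain ⟨hSI, hS, hIC, hC, hJ⟩ := hSC I hI
  obtain ⟨hSI', hS', hIC', hC', hJ'⟩ := hSC' (C I) hC I ⟨hI, hIC⟩
  refine ⟨union_subset hSI hSI', ?_, hIC', hC', fun J hSJ hJI => ?_⟩
  · calc (#(S I ∪ S' (C I) I) : ℝ) ≤ #(S I) + #(S' (C I) I) := mod_cast card_union_le _ _
      _ ≤ s + s' := by gcongr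
  · rw [union_subset_iff] at hSJ
    simp only [hJ J hSJ.1 hJI, hJ' J hSJ.2 hJI, and_self]

theorem card_filter_mem_le_of_hasContainers {𝓘 : Set (Finset α)} {s b : ℝ}
    (h : HasContainers 𝓘 s b) (G : Finset α) (t : ℕ) :
    #{F ∈ powersetCard t G | F ∈ 𝓘} ≤
      ∑ i ∈ range (⌊s⌋₊ + 1), (#G).choose i * ⌊b⌋₊.choose (t - i) := by
  obtain ⟨S, C, hSC⟩ := h
  let extensions (X : Finset α) (j : ℕ) := if #(C X) ≤ ⌊b⌋₊ then powersetCard j (C X) else ∅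
  have hext : ∀ X j, #(extensions X j) ≤ ⌊b⌋₊.choose j := by
    intro X j
    by_cases hX : #(C X) ≤ ⌊b⌋₊
    · simpa [extensions, hX] using Nat.choose_le_choose j hX
    · simp [extensions, hX]
  have hcover : {F ∈ powersetCard t G | F ∈ 𝓘} ⊆ (range (⌊s⌋₊ + 1)).biUnion fun i =>
      (powersetCard i G).biUnion fun X => (extensions X (t - i)).image (X ∪ ·) := by
    intro F hF
    obtain ⟨hFt, hF𝓘⟩ := mem_filter.1 hF
    obtain ⟨hFG, rfl⟩ := mem_powersetCard.1 hFt
    obtain ⟨hSF, hS, hFC, hC, hJ⟩ := hSC F hF𝓘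
    have hCS : C (S F) = C F := (hJ (S F) subset_rfl hSF).2
    simp only [mem_biUnion, mem_image, mem_range, mem_powersetCard]
    refine ⟨#(S F), Nat.lt_succ_of_le (Nat.le_floor hS), S F, ⟨hSF.trans hFG, rfl⟩, F \ S F, ?_,
      union_sdiff_of_subset hSF⟩
    simp only [extensions, hCS, Nat.le_floor hC, if_true, mem_powersetCard]
    exact ⟨sdiff_subset.trans hFC, card_sdiff_of_subset hSF⟩
  refine (card_le_card hcover).trans (card_biUnion_le.trans (sum_le_sum fun i _ => ?_))
  rw [← card_powersetCard]
  exact card_biUnion_le_card_mul _ _ _ fun X _ => card_image_le.trans (hext X (t - i))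

/-- The codegree of `X` in the hypergraph on `G` whose edges `E` carry the weights `w E`: the total
weight of the edges containing `X`. In particular `codegree G w ∅` is the total weight. -/
noncomputable def codegree (G : Finset α) (w : Finset α → ℝ) (X : Finset α) : ℝ :=
  ∑ E ∈ G.powerset with X ⊆ E, w E

/-- The independent sets of the hypergraph on `G` with edge weights `w`. -/
def independentSets (G : Finset α) (w : Finset α → ℝ) : Set (Finset α) :=
  {I | I ⊆ G ∧ ∀ E ⊆ I, w E = 0}

/-- The weighted hypergraph on `G` is `l`-uniform and satisfies the codegree condition of the
container method: each further vertex of `X` gains a factor `p` over the degree bound `D`. -/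
structure IsSpread (l : ℕ) (D p : ℝ) (G : Finset α) (w : Finset α → ℝ) : Prop where
  nonneg : ∀ E, 0 ≤ w E
  card_eq : ∀ E, w E ≠ 0 → #E = l
  codegree_le : ∀ X : Finset α, X.Nonempty → codegree G w X ≤ D * p ^ (#X - 1)

/-- The link of the vertex `v`, with the weights inherited from `w`. -/
noncomputable def link (w : Finset α → ℝ) (v : α) (X : Finset α) : ℝ :=
  if v ∈ X then 0 else w (insert v X)

/-- The weights `w` with every edge that contains a member of `𝒳` deleted. -/
noncomputable def prune (𝒳 : Set (Finset α)) (w : Finset α → ℝ) (E : Finset α) : ℝ :=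
  if ∃ X ⊆ E, X ∈ 𝒳 then 0 else w E

variable {G : Finset α} {w h : Finset α → ℝ} {l : ℕ} {D p : ℝ} {v : α} {X : Finset α}

theorem codegree_mono {U : Finset α} {w' : Finset α → ℝ} (hU : U ⊆ G) (hw : ∀ E, 0 ≤ w E)
    (hle : ∀ E, w E ≤ w' E) (X : Finset α) : codegree U w X ≤ codegree G w' X :=
  (sum_le_sum fun E _ => hle E).trans <|
    sum_le_sum_of_subset_of_nonneg (filter_subset_filter _ (powerset_mono.2 hU))
      fun E _ _ => (hw E).trans (hle E)

theorem codegree_nonneg (hw : ∀ E, 0 ≤ w E) (X : Finset α) : 0 ≤ codegree G w X :=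
  sum_nonneg fun E _ => hw E

theorem codegree_add (G : Finset α) (w h : Finset α → ℝ) (X : Finset α) :
    codegree G (w + h) X = codegree G w X + codegree G h X :=
  sum_add_distrib

theorem codegree_link_of_mem (hv : v ∈ X) : codegree G (link w v) X = 0 :=
  sum_eq_zero fun _ hE => if_pos ((mem_filter.1 hE).2 hv)

theorem codegree_link_of_notMem (hG : v ∈ G) (hv : v ∉ X) :
    codegree G (link w v) X = codegree G w (insert v X) := by
  simp only [codegree, link, sum_ite, sum_const_zero, zero_add]
  refine sum_nbij' (insert v) (fun E => E.erase v) ?_ ?_ ?_ ?_ fun _ _ => rfl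
  · intro E hE
    simp only [mem_filter, mem_powerset] at hE ⊢
    exact ⟨insert_subset hG hE.1.1, insert_subset_insert v hE.1.2⟩
  · intro E hE
    simp only [mem_filter, mem_powerset] at hE ⊢
    exact ⟨⟨(erase_subset v E).trans hE.1,
      subset_erase.2 ⟨(subset_insert v X).trans hE.2, hv⟩⟩, notMem_erase v E⟩
  · exact fun E hE => erase_insert (mem_filter.1 hE).2
  · exact fun E hE => insert_erase ((mem_filter.1 hE).2 (mem_insert_self v X))

theorem sum_codegree {κ : Type*} (s : Finset κ) (f : κ → Finset α) :
    ∑ i ∈ s, codegree G w (f i) = ∑ E ∈ G.powerset, #{i ∈ s | f i ⊆ E} * w E := by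
  simp only [codegree, sum_filter]
  rw [sum_comm]
  exact sum_congr rfl fun E _ => by rw [← sum_filter, sum_const, nsmul_eq_mul]

theorem sum_codegree_powerset (hw : ∀ E, w E ≠ 0 → #E = l) :
    ∑ X ∈ G.powerset, codegree G w X = 2 ^ l * codegree G w ∅ := by
  rw [sum_codegree, codegree, filter_true_of_mem fun _ _ => empty_subset _, mul_sum]
  refine sum_congr rfl fun E hE => ?_
  rcases eq_or_ne (w E) 0 with h0 | h0
  · rw [h0, mul_zero, mul_zero]
  · have hsub : {X ∈ G.powerset | X ⊆ E} = E.powerset := by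
      ext X
      simp only [mem_filter, mem_powerset, and_iff_right_iff_imp]
      exact fun hX => hX.trans (mem_powerset.1 hE)
    rw [hsub, card_powerset, hw E h0, Nat.cast_pow, Nat.cast_ofNat]

theorem sum_codegree_singleton (hw : ∀ E, w E ≠ 0 → #E = l) :
    ∑ v ∈ G, codegree G w {v} = l * codegree G w ∅ := by
  rw [sum_codegree, codegree, filter_true_of_mem fun _ _ => empty_subset _, mul_sum]
  refine sum_congr rfl fun E hE => ?_
  rcases eq_or_ne (w E) 0 with h0 | h0
  · rw [h0, mul_zero, mul_zero]
  · simp only [singleton_subset_iff, filter_mem_eq_inter,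
      inter_eq_right.2 (mem_powerset.1 hE), hw E h0]

theorem codegree_prune_of_mem {𝒳 : Set (Finset α)} (hX : ∃ Y ⊆ X, Y ∈ 𝒳) :
    codegree G (prune 𝒳 w) X = 0 := by
  obtain ⟨Y, hYX, hY⟩ := hX
  exact sum_eq_zero fun E hE => if_pos ⟨Y, hYX.trans (mem_filter.1 hE).2, hY⟩

theorem codegree_sub_codegree_prune_le (hw : ∀ E, 0 ≤ w E) (𝒳 : Set (Finset α)) :
    codegree G w ∅ - codegree G (prune 𝒳 w) ∅ ≤ ∑ X ∈ G.powerset with X ∈ 𝒳, codegree G w X := by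
  rw [sum_codegree, codegree, codegree, ← sum_sub_distrib,
    filter_true_of_mem fun _ _ => empty_subset _]
  refine sum_le_sum fun E hE => ?_
  rw [prune]
  split_ifs with hdel
  · obtain ⟨X, hXE, hX⟩ := hdel
    have hpos : 0 < #{Y ∈ {Y ∈ G.powerset | Y ∈ 𝒳} | Y ⊆ E} := by
      refine card_pos.2 ⟨X, mem_filter.2 ⟨mem_filter.2 ⟨?_, hX⟩, hXE⟩⟩
      exact mem_powerset.2 (hXE.trans (mem_powerset.1 hE))
    rw [sub_zero]
    exact le_mul_of_one_le_left (hw E) (mod_cast hpos)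
  · rw [sub_self]
    exact mul_nonneg (Nat.cast_nonneg _) (hw E)

theorem IsSpread.subset (hw : IsSpread l D p G w) {U : Finset α} (hU : U ⊆ G) :
    IsSpread l D p U w where
  nonneg := hw.nonneg
  card_eq := hw.card_eq
  codegree_le X hX := (codegree_mono hU hw.nonneg (fun _ => le_rfl) X).trans (hw.codegree_le X hX)

/-- The nonempty sets whose codegree in `h` has reached `D * p ^ #X`, half of what the codegree
condition for the link hypergraph under construction allows. -/
def saturated (D p : ℝ) (G : Finset α) (h : Finset α → ℝ) : Set (Finset α) :=
  {X | X.Nonempty ∧ D * p ^ #X ≤ codegree G h X}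

theorem prune_nonneg (hw : ∀ E, 0 ≤ w E) (𝒳 : Set (Finset α)) (E : Finset α) :
    0 ≤ prune 𝒳 w E := by
  rw [prune]
  split_ifs
  exacts [le_rfl, hw E]

theorem prune_le (hw : ∀ E, 0 ≤ w E) (𝒳 : Set (Finset α)) (E : Finset α) : prune 𝒳 w E ≤ w E := by
  rw [prune]
  split_ifs
  exacts [hw E, le_rfl]

theorem ne_zero_of_prune_ne_zero {𝒳 : Set (Finset α)} {E : Finset α} (hE : prune 𝒳 w E ≠ 0) :
    w E ≠ 0 := by
  rw [prune] at hE
  split_ifs at hE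
  exacts [absurd rfl hE, hE]

theorem IsSpread.le_codegree_prune_saturated (hw : IsSpread (l + 1) D p G w) (hp : 0 < p)
    (hh : ∀ E, 0 ≤ h E) (hhl : ∀ E, h E ≠ 0 → #E = l)
    (hsmall : codegree G h ∅ ≤ p / 2 ^ (l + 2) * codegree G w ∅) :
    3 / 4 * codegree G w ∅ ≤ codegree G (prune (saturated D p G h) w) ∅ := by
  have hsat : ∀ X ∈ saturated D p G h, codegree G w X ≤ codegree G h X / p := by
    rintro X ⟨hX, hdeg⟩
    rw [le_div_iff₀ hp]
    calc codegree G w X * p ≤ D * p ^ (#X - 1) * p := by gcongr; exact hw.codegree_le X hX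
      _ = D * p ^ #X := by rw [mul_assoc, ← pow_succ, Nat.sub_add_cancel hX.card_pos]
      _ ≤ codegree G h X := hdeg
  have hdeleted : codegree G w ∅ - codegree G (prune (saturated D p G h) w) ∅ ≤
      codegree G w ∅ / 4 :=
    calc _ ≤ ∑ X ∈ G.powerset with X ∈ saturated D p G h, codegree G w X :=
          codegree_sub_codegree_prune_le hw.nonneg _
      _ ≤ ∑ X ∈ G.powerset with X ∈ saturated D p G h, codegree G h X / p :=
          sum_le_sum fun X hX => hsat X (mem_filter.1 hX).2
      _ ≤ ∑ X ∈ G.powerset, codegree G h X / p :=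
          sum_le_sum_of_subset_of_nonneg (filter_subset _ _)
            fun X _ _ => div_nonneg (codegree_nonneg hh X) hp.le
      _ = 2 ^ l * codegree G h ∅ / p := by rw [← sum_div, sum_codegree_powerset hhl]
      _ ≤ 2 ^ l * (p / 2 ^ (l + 2) * codegree G w ∅) / p := by gcongr
      _ = codegree G w ∅ / 4 := by
        field_simp
        ring
  linarith

theorem sum_le_card_filter_mul_add {G : Finset α} {d : α → ℝ} {M τ : ℝ} (hd : ∀ v ∈ G, d v ≤ M)
    (hτ : 0 ≤ τ) : ∑ v ∈ G, d v ≤ #{v ∈ G | τ ≤ d v} * M + #G * τ := by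
  calc ∑ v ∈ G, d v ≤ ∑ v ∈ G, ((if τ ≤ d v then M else 0) + τ) := by
        refine sum_le_sum fun v hv => ?_
        split_ifs with h
        · linarith [hd v hv]
        · linarith
    _ = _ := by rw [sum_add_distrib, ← sum_filter, sum_const, sum_const, nsmul_eq_mul, nsmul_eq_mul]

theorem IsSpread.le_card_high_degree {n K : ℝ} (hw : IsSpread (l + 1) D p G w) (hp : 0 < p)
    (hn : 0 < n) (hD : 0 < D) (hG : #G ≤ n) (hK : 0 < K) (hDn : D * n ≤ K * codegree G w ∅)
    (hh : ∀ E, 0 ≤ h E) (hhl : ∀ E, h E ≠ 0 → #E = l)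
    (hsmall : codegree G h ∅ ≤ p / 2 ^ (l + 2) * codegree G w ∅) :
    n / (2 * K) ≤ #{v ∈ G | codegree G w ∅ / (4 * n) ≤
      codegree G (prune (saturated D p G h) w) {v}} := by
  set g := prune (saturated D p G h) w
  set e := codegree G w ∅
  set N := #{v ∈ G | e / (4 * n) ≤ codegree G g {v}}
  have he : 0 ≤ e := codegree_nonneg hw.nonneg ∅
  have hdeg : ∀ v ∈ G, codegree G g {v} ≤ D := fun v _ => by
    simpa using (codegree_mono subset_rfl (prune_nonneg hw.nonneg _) (prune_le hw.nonneg _) _).trans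
      (hw.codegree_le {v} (singleton_nonempty v))
  have hsum : 3 / 4 * e ≤ ∑ v ∈ G, codegree G g {v} := by
    rw [sum_codegree_singleton fun E hE => hw.card_eq E (ne_zero_of_prune_ne_zero hE)]
    refine (hw.le_codegree_prune_saturated hp hh hhl hsmall).trans
      (le_mul_of_one_le_left (codegree_nonneg (prune_nonneg hw.nonneg _) ∅) ?_)
    exact_mod_cast Nat.le_add_left 1 l
  have hhalf : e / 2 ≤ N * D := by
    have hlow : #G * (e / (4 * n)) ≤ e / 4 :=
      calc #G * (e / (4 * n)) ≤ n * (e / (4 * n)) := by gcongr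
        _ = e / 4 := by field_simp
    linarith [sum_le_card_filter_mul_add hdeg (τ := e / (4 * n)) (by positivity)]
  rw [div_le_iff₀ (by positivity)]
  refine le_of_mul_le_mul_left ?_ hD
  calc D * n ≤ K * e := hDn
    _ ≤ 2 * K * (N * D) := by nlinarith
    _ = _ := by ring

theorem IsSpread.add_link (hw : IsSpread (l + 1) D p G w) (hh : IsSpread l (2 * D * p) p G h)
    (hv : v ∈ G) :
    IsSpread l (2 * D * p) p G (h + link (prune (saturated D p G h) w) v) where
  nonneg E := by
    refine add_nonneg (hh.nonneg E) ?_
    rw [link]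
    split_ifs
    exacts [le_rfl, prune_nonneg hw.nonneg _ _]
  card_eq E hE := by
    by_cases h0 : h E = 0
    · rw [Pi.add_apply, h0, zero_add, link] at hE
      split_ifs at hE with hvE
      · exact absurd rfl hE
      · have := hw.card_eq _ (ne_zero_of_prune_ne_zero hE)
        rw [card_insert_of_notMem hvE] at this
        exact Nat.succ_injective this
    · exact hh.card_eq E h0
  codegree_le X hX := by
    have hpow : 2 * D * p * p ^ (#X - 1) = D * p ^ #X + D * p ^ #X := by
      rw [mul_assoc (2 * D), ← pow_succ', Nat.sub_add_cancel hX.card_pos]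
      ring
    rw [codegree_add]
    by_cases hvX : v ∈ X
    · rw [codegree_link_of_mem hvX, add_zero]
      exact hh.codegree_le X hX
    rw [codegree_link_of_notMem hv hvX]
    by_cases hsat : X ∈ saturated D p G h
    · rw [codegree_prune_of_mem ⟨X, subset_insert v X, hsat⟩, add_zero]
      exact hh.codegree_le X hX
    rw [hpow]
    refine add_le_add (le_of_not_ge fun hle => hsat ⟨hX, hle⟩) ?_
    calc _ ≤ codegree G w (insert v X) :=
          codegree_mono subset_rfl (prune_nonneg hw.nonneg _) (prune_le hw.nonneg _) _
      _ ≤ D * p ^ (#(insert v X) - 1) := hw.codegree_le _ (insert_nonempty v X)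
      _ = D * p ^ #X := by rw [card_insert_of_notMem hvX, Nat.add_sub_cancel]

theorem mem_independentSets_add_link {𝒳 : Set (Finset α)} {I : Finset α}
    (hIw : I ∈ independentSets G w) (hIh : I ∈ independentSets G h) (hv : v ∈ I) :
    I ∈ independentSets G (h + link (prune 𝒳 w) v) := by
  refine ⟨hIw.1, fun E hE => ?_⟩
  rw [Pi.add_apply, hIh.2 E hE, zero_add, link]
  split_ifs
  · rfl
  · by_contra hne
    exact ne_zero_of_prune_ne_zero hne (hIw.2 _ (insert_subset hv hE))

/-- Each step adds the link of one high-degree vertex of the fingerprint to `h`, until the weight of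
`h` is large enough for `hrec`; `j` bounds the number of steps still needed. -/
theorem IsSpread.hasContainers_of_link {n K s b : ℝ} (hw : IsSpread (l + 1) D p G w) (hp : 0 < p)
    (hn : 0 < n) (hD : 0 < D) (hG : #G ≤ n) (hK : 0 < K) (hDn : D * n ≤ K * codegree G w ∅)
    (hs : 0 ≤ s) (hb : #G - n / (2 * K) ≤ b)
    (hrec : ∀ h, IsSpread l (2 * D * p) p G h →
      p / 2 ^ (l + 2) * codegree G w ∅ ≤ codegree G h ∅ → HasContainers (independentSets G h) s b)
    (j : ℕ) (h : Finset α → ℝ) (hh : IsSpread l (2 * D * p) p G h)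
    (hj : p / 2 ^ (l + 2) * codegree G w ∅ ≤ codegree G h ∅ + j * (codegree G w ∅ / (4 * n))) :
    HasContainers (independentSets G w ∩ independentSets G h) (s + j) b := by
  induction j generalizing h with
  | zero =>
    rw [Nat.cast_zero, zero_mul, add_zero] at hj
    exact (hrec h hh hj).mono Set.inter_subset_right (by simp) le_rfl
  | succ j ih =>
    rcases le_total (p / 2 ^ (l + 2) * codegree G w ∅) (codegree G h ∅) with hlarge | hsmall
    · refine (hrec h hh hlarge).mono Set.inter_subset_right ?_ le_rfl
      exact le_add_of_nonneg_right (Nat.cast_nonneg _)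
    set g := prune (saturated D p G h) w
    set H := {v ∈ G | codegree G w ∅ / (4 * n) ≤ codegree G g {v}}
    rw [Nat.cast_succ, ← add_assoc]
    refine .of_forall_mem (H := H) (fun v hv => ?_) ?_
    · obtain ⟨hvG, hvdeg⟩ := mem_filter.1 hv
      refine (ih (h + link g v) (hw.add_link hh hvG) ?_).mono ?_ le_rfl le_rfl
      · rw [codegree_add, codegree_link_of_notMem hvG (notMem_empty v), insert_empty_eq]
        push_cast at hj
        linarith
      · rintro I ⟨⟨hIw, hIh⟩, hvI⟩
        exact ⟨hIw, mem_independentSets_add_link hIw hIh hvI⟩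
    · refine hasContainers_of_forall_subset (C := G \ H) (by positivity) ?_ ?_
      · rintro I ⟨⟨hIw, -⟩, hdisj⟩
        exact subset_sdiff.2 ⟨hIw.1, hdisj⟩
      · rw [cast_card_sdiff (filter_subset _ _)]
        linarith [hw.le_card_high_degree hp hn hD hG hK hDn hh.nonneg hh.card_eq hsmall]

theorem independentSets_subset {U : Finset α} :
    independentSets G w ∩ {I | I ⊆ U} ⊆ independentSets U w :=
  fun _ hI => ⟨hI.2, hI.1.2⟩

theorem IsSpread.zero (l : ℕ) (hD : 0 ≤ D) (hp : 0 ≤ p) (G : Finset α) : IsSpread l D p G 0 where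
  nonneg _ := le_rfl
  card_eq _ hE := absurd rfl hE
  codegree_le X _ := (sum_const_zero (s := {E ∈ G.powerset | X ⊆ E})).trans_le (by positivity)

theorem IsSpread.codegree_empty_of_uniformity_zero (hw : IsSpread 0 D p G w) {I : Finset α}
    (hI : I ∈ independentSets G w) : codegree G w ∅ = 0 := by
  refine sum_eq_zero fun E _ => ?_
  by_contra hE
  have hE0 : E = ∅ := card_eq_zero.1 (hw.card_eq E hE)
  exact hE (hI.2 E (hE0 ▸ empty_subset I))

theorem IsSpread.hasContainers_succ {n K T δ : ℝ} (hw : IsSpread (l + 1) D p G w) (hp : 0 < p)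
    (hpn : 1 ≤ p * n) (hD : 0 < D) (hG : #G ≤ n) (hK : 0 < K) (hDn : D * n ≤ K * codegree G w ∅)
    (hT : 0 ≤ T)
    (hrec : ∀ h, IsSpread l (2 * D * p) p G h →
      2 * D * p * n ≤ K * 2 ^ (l + 3) * codegree G h ∅ →
        HasContainers (independentSets G h) (T * (p * n)) (#G - δ * n)) :
    HasContainers (independentSets G w) ((T + 2) * (p * n)) (#G - min δ (1 / (2 * K)) * n) := by
  have hn : 0 < n := pos_of_mul_pos_right (one_pos.trans_le hpn) hp.le
  have hweight : 0 ≤ codegree G w ∅ := codegree_nonneg hw.nonneg ∅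
  have hδ : min δ (1 / (2 * K)) * n ≤ δ * n := by gcongr; exact min_le_left _ _
  have hb : (#G : ℝ) - n / (2 * K) ≤ #G - min δ (1 / (2 * K)) * n := by
    rw [div_eq_mul_one_div n, mul_comm n]
    gcongr
    exact min_le_right _ _
  have hceil : (⌈p * n⌉₊ : ℝ) ≤ 2 * (p * n) := by
    linarith [Nat.ceil_lt_add_one (zero_le_one.trans hpn)]
  refine (hw.hasContainers_of_link (s := T * (p * n)) hp hn hD hG hK hDn (by positivity) hb
    (fun h hh hlarge => ?_) ⌈p * n⌉₊ 0 (.zero l (by positivity) hp.le G) ?_).mono ?_ ?_ le_rfl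
  · refine (hrec h hh ?_).mono subset_rfl le_rfl (by linarith)
    calc 2 * D * p * n = 2 * p * (D * n) := by ring
      _ ≤ 2 * p * (K * codegree G w ∅) := by gcongr
      _ = K * 2 ^ (l + 3) * (p / 2 ^ (l + 2) * codegree G w ∅) := by field_simp; ring
      _ ≤ K * 2 ^ (l + 3) * codegree G h ∅ := by gcongr
  · have hpow : (4 : ℝ) ≤ 2 ^ (l + 2) := by
      rw [pow_add]
      linarith [one_le_pow₀ (M₀ := ℝ) one_le_two (n := l)]
    calc p / 2 ^ (l + 2) * codegree G w ∅ ≤ p / 4 * codegree G w ∅ := by gcongr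
      _ = p * n * (codegree G w ∅ / (4 * n)) := by field_simp
      _ ≤ ⌈p * n⌉₊ * (codegree G w ∅ / (4 * n)) := by gcongr; exact Nat.le_ceil _
      _ ≤ codegree G 0 ∅ + ⌈p * n⌉₊ * (codegree G w ∅ / (4 * n)) :=
        le_add_of_nonneg_left (codegree_nonneg (fun _ => le_rfl) ∅)
  · exact fun I hI => ⟨hI, hI.1, fun _ _ => rfl⟩
  · linarith

theorem exists_hasContainers (l : ℕ) {K : ℝ} (hK : 0 < K) :
    ∃ T : ℝ, 0 ≤ T ∧ ∃ δ : ℝ, 0 < δ ∧ ∀ {n p D : ℝ} {G : Finset α} {w : Finset α → ℝ},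
      #G ≤ n → 0 < p → 1 ≤ p * n → 0 < D → IsSpread l D p G w → D * n ≤ K * codegree G w ∅ →
        HasContainers (independentSets G w) (T * (p * n)) (#G - δ * n) := by
  induction l generalizing K with
  | zero =>
    refine ⟨0, le_rfl, 1, one_pos, fun {n p D G w} _ hp hpn hD hw hDn =>
      ⟨id, id, fun I hI => absurd hDn (not_le.2 ?_)⟩⟩
    rw [hw.codegree_empty_of_uniformity_zero hI, mul_zero]
    exact mul_pos hD (pos_of_mul_pos_right (one_pos.trans_le hpn) hp.le)
  | succ l ih =>
    obtain ⟨T, hT, δ, hδ, hrec⟩ := ih (K := K * 2 ^ (l + 3)) (by positivity)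
    exact ⟨T + 2, by positivity, min δ (1 / (2 * K)), by positivity,
      fun {n p D G w} hG hp hpn hD hw hDn => hw.hasContainers_succ hp hpn hD hG hK hDn hT
        fun h hh hlarge => hrec hG hp hpn (by positivity) hh hlarge⟩

theorem exists_hasContainers_of_supersaturated (l : ℕ) {K : ℝ} (hK : 0 < K) :
    ∃ T : ℝ, 0 ≤ T ∧ ∀ {n p D b : ℝ} {G : Finset α} {w : Finset α → ℝ},
      #G ≤ n → 0 < p → 1 ≤ p * n → 0 < D → 0 ≤ b → IsSpread l D p G w →
        (∀ U ⊆ G, b ≤ #U → D * n ≤ K * codegree U w ∅) →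
          HasContainers (independentSets G w) (T * (p * n)) b := by
  obtain ⟨T, hT, δ, hδ, hcont⟩ := exists_hasContainers (α := α) l hK
  obtain ⟨J, hJ⟩ := exists_nat_ge (1 / δ)
  refine ⟨J * T, by positivity, fun {n p D b G w} hG hp hpn hD hb hw hsup => ?_⟩
  have hiterate : ∀ (j : ℕ) (U : Finset α), U ⊆ G → #U ≤ b + j * (δ * n) →
      HasContainers (independentSets G w ∩ {I | I ⊆ U}) (j * (T * (p * n))) b := by
    intro j
    induction j with
    | zero =>
      exact fun U _ hU => hasContainers_of_forall_subset (by simp) (fun _ hI => hI.2)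
        (by simpa using hU)
    | succ j ih =>
      intro U hUG hU
      rcases le_total (#U : ℝ) b with hsmall | hlarge
      · exact hasContainers_of_forall_subset (by positivity) (fun _ hI => hI.2) hsmall
      have hUn : (#U : ℝ) ≤ n := (Nat.cast_le.2 (card_le_card hUG)).trans hG
      have hshrink := (hcont hUn hp hpn hD (hw.subset hUG) (hsup U hUG hlarge)).mono
        (independentSets_subset (G := G)) le_rfl le_rfl
      refine (hshrink.bind fun C hC => (ih (U ∩ C) (inter_subset_left.trans hUG) ?_).mono ?_
        le_rfl le_rfl).mono subset_rfl (by push_cast; linarith) le_rfl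
      · have hUC : (#(U ∩ C) : ℝ) ≤ #C := Nat.cast_le.2 (card_le_card inter_subset_right)
        push_cast at hU
        linarith
      · exact fun I hI => ⟨hI.1.1, subset_inter hI.1.2 hI.2⟩
  have hn : 0 < n := pos_of_mul_pos_right (one_pos.trans_le hpn) hp.le
  have hGJ : (#G : ℝ) ≤ b + J * (δ * n) := by
    rw [div_le_iff₀ hδ] at hJ
    nlinarith
  exact (hiterate J G subset_rfl hGJ).mono (fun I hI => ⟨hI, hI.1⟩) (by rw [mul_assoc]) le_rfl

theorem pow_mul_choose_le (a b j : ℕ) : a ^ j * b.choose j ≤ (a * b).choose j := by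
  rcases Nat.eq_zero_or_pos a with rfl | ha
  · cases j <;> simp
  induction j with
  | zero => simp
  | succ j ih =>
    have hsub : a * (b - j) ≤ a * b - j := by
      rw [Nat.mul_sub]
      exact Nat.sub_le_sub_left (Nat.le_mul_of_pos_left j ha) _
    refine le_of_mul_le_mul_right ?_ j.succ_pos
    rw [mul_assoc, Nat.choose_succ_right_eq, Nat.choose_succ_right_eq]
    calc a ^ (j + 1) * (b.choose j * (b - j)) = a ^ j * b.choose j * (a * (b - j)) := by ring
      _ ≤ (a * b).choose j * (a * b - j) := Nat.mul_le_mul ih hsub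

theorem choose_le_pow_mul_choose {n b g : ℕ} (hn : 2 * n ≤ g * b) {s : ℕ} (hs : 2 * s ≤ b) :
    n.choose s ≤ g ^ s * b.choose s := by
  induction s with
  | zero => simp
  | succ s ih =>
    have hsub : n - s ≤ g * (b - s) := by
      have hb : b ≤ 2 * (b - s) := by omega
      have hg : 2 * n ≤ g * (2 * (b - s)) := hn.trans (Nat.mul_le_mul_left g hb)
      rw [Nat.mul_left_comm] at hg
      omega
    refine le_of_mul_le_mul_right ?_ s.succ_pos
    rw [mul_assoc, Nat.choose_succ_right_eq, Nat.choose_succ_right_eq]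
    calc n.choose s * (n - s) ≤ g ^ s * b.choose s * (g * (b - s)) :=
          Nat.mul_le_mul (ih (by omega)) hsub
      _ = g ^ (s + 1) * (b.choose s * (b - s)) := by ring

theorem two_pow_mul_choose_mul_choose_le {n b b' g L s t : ℕ} (hn : 2 * n ≤ g * b)
    (hb : 65 * b' ≤ b) (hg : g ≤ 2 ^ L) (hs : 2 * s ≤ t) (hLs : L * s ≤ t) :
    2 ^ t * (n.choose s * b'.choose (t - s)) ≤ b.choose t := by
  rcases lt_or_ge b' (t - s) with hlt | hle
  · simp [Nat.choose_eq_zero_of_lt hlt]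
  have hgt : g ^ s ≤ 2 ^ t := by
    calc g ^ s ≤ (2 ^ L) ^ s := Nat.pow_le_pow_left hg s
      _ = 2 ^ (L * s) := (pow_mul 2 L s).symm
      _ ≤ 2 ^ t := Nat.pow_le_pow_right two_pos hLs
  have h64 : 2 ^ t * (2 ^ t * 2 ^ t) ≤ 64 ^ (t - s) := by
    rw [show 64 = 2 ^ 6 from rfl, ← pow_mul, ← pow_add, ← pow_add]
    exact Nat.pow_le_pow_right two_pos (by omega)
  refine le_of_mul_le_mul_left (a := 2 ^ t * 2 ^ t) ?_ (by positivity)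
  calc 2 ^ t * 2 ^ t * (2 ^ t * (n.choose s * b'.choose (t - s)))
      = 2 ^ t * (2 ^ t * 2 ^ t) * b'.choose (t - s) * n.choose s := by ring
    _ ≤ 64 ^ (t - s) * b'.choose (t - s) * (g ^ s * b.choose s) := by
      gcongr
      exact choose_le_pow_mul_choose hn (by omega)
    _ ≤ (64 * b').choose (t - s) * (2 ^ t * b.choose s) := by
      gcongr
      exact pow_mul_choose_le 64 b' (t - s)
    _ ≤ (b - s).choose (t - s) * (2 ^ t * b.choose s) := by
      gcongr
      omega
    _ = 2 ^ t * (b.choose t * t.choose s) := by rw [Nat.choose_mul (by omega)]; ring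
    _ ≤ 2 ^ t * (b.choose t * 2 ^ t) := by
      gcongr
      exact Nat.choose_le_two_pow t s
    _ = 2 ^ t * 2 ^ t * b.choose t := by ring

theorem sum_choose_mul_choose_le {n b b' g L s₀ t : ℕ} (hn : 2 * n ≤ g * b) (hb : 65 * b' ≤ b)
    (hg : g ≤ 2 ^ L) (hL : 2 ≤ L) (hs₀ : L * s₀ ≤ t) :
    ∑ s ∈ range (s₀ + 1), n.choose s * b'.choose (t - s) ≤ b.choose t := by
  have hcard : s₀ + 1 ≤ 2 ^ t := by
    have := Nat.mul_le_mul_right s₀ hL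
    have := t.lt_two_pow_self
    omega
  refine le_of_mul_le_mul_left (a := 2 ^ t) ?_ (by positivity)
  rw [mul_sum]
  calc ∑ s ∈ range (s₀ + 1), 2 ^ t * (n.choose s * b'.choose (t - s))
      ≤ ∑ _s ∈ range (s₀ + 1), b.choose t := sum_le_sum fun _ hs => by
        have hLs := (Nat.mul_le_mul_left L (mem_range_succ_iff.1 hs)).trans hs₀
        exact two_pow_mul_choose_mul_choose_le hn hb hg
          ((Nat.mul_le_mul_right _ hL).trans hLs) hLs
    _ = (s₀ + 1) * b.choose t := by rw [sum_const, card_range, smul_eq_mul]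
    _ ≤ 2 ^ t * b.choose t := Nat.mul_le_mul_right _ hcard

theorem exists_forall_sum_choose_mul_choose_le {β : ℝ} (hβ : 0 < β) :
    ∃ L : ℝ, 0 < L ∧ ∃ n₀ : ℕ, ∀ n ≥ n₀, ∀ (s : ℝ) (t : ℕ), 0 ≤ s → L * s ≤ t →
      ∑ i ∈ range (⌊s⌋₊ + 1), n.choose i * ⌊β / 65 * n⌋₊.choose (t - i) ≤
        ⌊β * n⌋₊.choose t := by
  obtain ⟨g, hg⟩ := exists_nat_ge (4 / β)
  obtain ⟨n₀, hn₀⟩ := exists_nat_ge (2 / β)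
  refine ⟨(g + 2 : ℕ), by positivity, n₀, fun n hn s t hs ht => ?_⟩
  refine sum_choose_mul_choose_le (g := g) (L := g + 2) ?_ ?_ ?_ (by omega) ?_
  · have hlarge : 2 ≤ β * n := by
      rw [← div_le_iff₀' hβ]
      exact hn₀.trans (Nat.cast_le.2 hn)
    have hfloor : β * n / 2 ≤ ⌊β * n⌋₊ := by linarith [Nat.lt_floor_add_one (β * n)]
    have hreal : (2 : ℝ) * n ≤ g * ⌊β * n⌋₊ := by
      calc (2 : ℝ) * n = 4 / β * (β * n / 2) := by field_simp; ring
        _ ≤ g * ⌊β * n⌋₊ := by gcongr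
    exact_mod_cast hreal
  · refine Nat.le_floor ?_
    push_cast
    linarith [Nat.floor_le (show 0 ≤ β / 65 * n by positivity)]
  · exact g.lt_two_pow_self.le.trans (Nat.pow_le_pow_right two_pos (by omega))
  · have hreal : ((g + 2 : ℕ) : ℝ) * ⌊s⌋₊ ≤ t := by
      refine le_trans ?_ ht
      gcongr
      exact Nat.floor_le hs
    exact_mod_cast hreal

theorem exists_card_filter_mem_independentSets_le (l : ℕ) {K β : ℝ} (hK : 0 < K) (hβ : 0 < β) :
    ∃ C : ℝ, 0 < C ∧ ∃ n₀ : ℕ, ∀ n ≥ n₀, ∀ {p D : ℝ} {G : Finset α} {w : Finset α → ℝ},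
      #G = n → 0 < p → 1 ≤ p * n → 0 < D → IsSpread l D p G w →
        (∀ U ⊆ G, β / 65 * n ≤ #U → D * n ≤ K * codegree U w ∅) →
          ∀ t : ℕ, C * (p * n) ≤ t →
            #{F ∈ powersetCard t G | F ∈ independentSets G w} ≤ ⌊β * n⌋₊.choose t := by
  obtain ⟨T, hT, hcont⟩ := exists_hasContainers_of_supersaturated (α := α) l hK
  obtain ⟨L, hL, n₀, hsum⟩ := exists_forall_sum_choose_mul_choose_le hβ
  refine ⟨L * (T + 1), by positivity, n₀, fun n hn {p D G w} hG hp hpn hD hw hsup t ht => ?_⟩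
  have hLt : L * (T * (p * n)) ≤ t := by
    rw [mul_assoc] at ht
    refine le_trans ?_ ht
    gcongr
    linarith
  have hcount := card_filter_mem_le_of_hasContainers
    (hcont (Nat.cast_le.2 hG.le) hp hpn hD (by positivity) hw hsup) G t
  rw [hG] at hcount
  exact hcount.trans (hsum n hn _ t (by positivity) hLt)

end Containers

section SolutionHypergraph

variable {J : Type*} [Fintype J] {M : Submodule ℤ (J → ℤ)} {F G : Finset ℤ}

/-- The solution hypergraph of `M` on `G`: its edges are the coordinate sets of the points of `M`
with pairwise distinct coordinates in `G`, and the weight of an edge is the number of points with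
that coordinate set. -/
noncomputable def solutionWeight (M : Submodule ℤ (J → ℤ)) (G E : Finset ℤ) : ℝ :=
  #{x ∈ latticePoints M G | Function.Injective x ∧ univ.image x = E}

theorem codegree_solutionWeight {U : Finset ℤ} (hU : U ⊆ G) (X : Finset ℤ) :
    codegree U (solutionWeight M G) X =
      #{x ∈ latticePoints M U | Function.Injective x ∧ (X : Set ℤ) ⊆ Set.range x} := by
  have hrange (X : Finset ℤ) (x : J → ℤ) : (X : Set ℤ) ⊆ Set.range x ↔ X ⊆ univ.image x := by
    rw [← coe_subset, coe_image, coe_univ, Set.image_univ]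
  have hmaps : ∀ x ∈ {x ∈ latticePoints M U | Function.Injective x ∧ (X : Set ℤ) ⊆ Set.range x},
      univ.image x ∈ {E ∈ U.powerset | X ⊆ E} := fun x hx => by
    simp only [mem_filter, mem_latticePoints] at hx
    simp only [mem_filter, mem_powerset, image_subset_iff]
    exact ⟨fun j _ => hx.1.1 j, (hrange X x).1 hx.2.2⟩
  rw [card_eq_sum_card_fiberwise hmaps, Nat.cast_sum]
  refine sum_congr (by congr!) fun E hE => ?_
  rw [mem_filter, mem_powerset] at hE
  rw [solutionWeight, filter_filter]
  congr 2
  ext x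
  simp only [mem_filter, mem_latticePoints]
  constructor
  · rintro ⟨⟨-, hM⟩, hinj, rfl⟩
    exact ⟨⟨fun j => hE.1 (mem_image_of_mem x (mem_univ j)), hM⟩, ⟨hinj, (hrange X x).2 hE.2⟩, rfl⟩
  · rintro ⟨⟨hxU, hM⟩, ⟨hinj, -⟩, rfl⟩
    exact ⟨⟨fun j => hU (hxU j), hM⟩, hinj, rfl⟩

theorem card_embedding_le_factorial (α β : Type*) [Finite α] [Fintype β]
    [Fintype (α ↪ β)] : Fintype.card (α ↪ β) ≤ (Fintype.card β).factorial := by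
  have := Fintype.ofFinite α
  rw [Fintype.card_embedding_eq]
  rcases le_or_gt (Fintype.card α) (Fintype.card β) with hle | hlt
  · rw [← Nat.factorial_mul_descFactorial hle]
    exact Nat.le_mul_of_pos_left _ (Nat.factorial_pos _)
  · exact (Nat.descFactorial_of_lt hlt).trans_le (Nat.zero_le _)

theorem card_filter_subset_range_le {α : Type*} {S : Finset (J → α)} {X : Finset α} {c : ℕ}
    (hS : ∀ (B : Finset J) (b : J → α), #B = #X → #{x ∈ S | ∀ j ∈ B, x j = b j} ≤ c) :
    #{x ∈ S | (X : Set α) ⊆ Set.range x} ≤ (Fintype.card J).factorial * c := by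
  have hfix : ∀ f : X ↪ J, #{x ∈ S | ∀ v : X, x (f v) = (v : α)} ≤ c := by
    intro f
    rcases eq_empty_or_nonempty {x ∈ S | ∀ v : X, x (f v) = (v : α)} with hempty | ⟨b, hb⟩
    · rw [hempty]
      exact Nat.zero_le c
    refine le_trans (card_le_card (monotone_filter_right _ fun x _ hx j hj => ?_))
      (hS (univ.map f) b (by rw [card_map, card_univ, Fintype.card_coe]))
    obtain ⟨v, -, rfl⟩ := mem_map.1 hj
    exact (hx v).trans ((mem_filter.1 hb).2 v).symm
  have hcover : {x ∈ S | (X : Set α) ⊆ Set.range x} ⊆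
      univ.biUnion fun f : X ↪ J => {x ∈ S | ∀ v : X, x (f v) = (v : α)} := by
    intro x hx
    rw [mem_filter] at hx
    choose f hf using fun v : X => hx.2 v.2
    let e : X ↪ J := ⟨f, fun u v huv => Subtype.ext (by rw [← hf u, ← hf v, huv])⟩
    exact mem_biUnion.2 ⟨e, mem_univ e, mem_filter.2 ⟨hx.1, hf⟩⟩
  exact ((card_le_card hcover).trans (card_biUnion_le_card_mul _ _ c fun f _ => hfix f)).trans
    (Nat.mul_le_mul_right c (card_embedding_le_factorial X J))

theorem isSpread_solutionWeight {D p : ℝ} (hD : 0 ≤ D) (hp : 0 ≤ p)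
    (hfix : ∀ (B : Finset J) (b : J → ℤ), B.Nonempty →
      #{x ∈ latticePoints M G | ∀ j ∈ B, x j = b j} ≤ D * p ^ (#B - 1)) :
    IsSpread (Fintype.card J) ((Fintype.card J).factorial * D) p G (solutionWeight M G) where
  nonneg _ := Nat.cast_nonneg _
  card_eq E hE := by
    obtain ⟨x, hx⟩ := card_ne_zero.1 (Nat.cast_ne_zero.1 hE)
    obtain ⟨-, hinj, rfl⟩ := mem_filter.1 hx
    rw [card_image_of_injective _ hinj, card_univ]
  codegree_le X hX := by
    have hfloor : ∀ (B : Finset J) (b : J → ℤ), #B = #X →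
        #{x ∈ latticePoints M G | ∀ j ∈ B, x j = b j} ≤ ⌊D * p ^ (#X - 1)⌋₊ := fun B b hB =>
      Nat.le_floor ((hfix B b (card_pos.1 (hB ▸ hX.card_pos))).trans_eq (by rw [hB]))
    have hle : #{x ∈ latticePoints M G | (X : Set ℤ) ⊆ Set.range x} ≤
        (Fintype.card J).factorial * ⌊D * p ^ (#X - 1)⌋₊ :=
      card_filter_subset_range_le fun B b hB => by convert hfloor B b hB
    rw [codegree_solutionWeight subset_rfl, mul_assoc]
    calc (#{x ∈ latticePoints M G | Function.Injective x ∧ (X : Set ℤ) ⊆ Set.range x} : ℝ)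
        ≤ #{x ∈ latticePoints M G | (X : Set ℤ) ⊆ Set.range x} :=
          Nat.cast_le.2 (card_le_card (monotone_filter_right _ fun _ _ hx => hx.2))
      _ ≤ (Fintype.card J).factorial * ⌊D * p ^ (#X - 1)⌋₊ := by exact_mod_cast hle
      _ ≤ (Fintype.card J).factorial * (D * p ^ (#X - 1)) := by
          gcongr
          exact Nat.floor_le (by positivity)

theorem mem_independentSets_solutionWeight (hF : F ⊆ G)
    (hfree : ∀ x ∈ latticePoints M F, ¬ Function.Injective x) :
    F ∈ independentSets G (solutionWeight M G) := by
  refine ⟨hF, fun E hE => Nat.cast_eq_zero.2 (card_eq_zero.2 (filter_false_of_mem ?_))⟩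
  rintro x hx ⟨hinj, rfl⟩
  rw [mem_latticePoints] at hx
  exact hfree x (mem_latticePoints.2 ⟨fun j => hE (mem_image_of_mem x (mem_univ j)), hx.2⟩) hinj

end SolutionHypergraph

section RodlRucinski

variable {m k : ℕ} {A : Matrix (Fin m) (Fin k) ℤ}

theorem rank_submatrix_notMem_eq_hRank (A : Matrix (Fin m) (Fin k) ℤ) (B : Finset (Fin k))
    [Fintype {j // j ∉ B}] :
    (A.submatrix id ((↑) : {j // j ∉ B} → Fin k)).rank = hRank A B := by
  rw [← rank_map_algebraMap (K := ℚ), hRank]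
  congr!

theorem hRank_le (A : Matrix (Fin m) (Fin k) ℤ) (B : Finset (Fin k)) : hRank A B ≤ k - #B := by
  refine (Matrix.rank_le_card_width _).trans_eq ?_
  rw [Fintype.card_subtype_compl, Fintype.card_coe, Fintype.card_fin]

theorem div_le_mParam (A : Matrix (Fin m) (Fin k) ℤ) {B : Finset (Fin k)} (hB : 2 ≤ #B) :
    ((#B : ℝ) - 1) / ((#B : ℝ) - 1 + hRank A B - m) ≤ mParam A := by
  refine le_csSup (Set.Finite.bddAbove ?_) ⟨B, hB, rfl⟩
  refine (Set.finite_range fun B : Finset (Fin k) =>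
    ((#B : ℝ) - 1) / ((#B : ℝ) - 1 + hRank A B - m)).subset ?_
  rintro _ ⟨B, -, rfl⟩
  exact ⟨B, rfl⟩

theorem one_div_mParam_le_one
    (hden : ∀ B : Finset (Fin k), 2 ≤ #B → 1 ≤ (#B : ℝ) - 1 + hRank A B - m) :
    1 / mParam A ≤ 1 := by
  rcases le_or_gt 2 #(univ : Finset (Fin k)) with hcard | hcard
  · have hrank : hRank A univ = 0 := by simpa using hRank_le A univ
    have hle : 1 ≤ mParam A := by
      refine le_trans ?_ (div_le_mParam A hcard)
      rw [le_div_iff₀ (one_pos.trans_le (hden univ hcard)), hrank, Nat.cast_zero]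
      linarith [m.cast_nonneg (α := ℝ)]
    exact (div_le_one₀ (one_pos.trans_le hle)).2 hle
  · have hzero : mParam A = 0 := by
      refine (congrArg sSup (Set.eq_empty_of_forall_notMem ?_)).trans Real.sSup_empty
      rintro _ ⟨B, hB, -⟩
      exact (hB.trans (card_le_univ B)).not_gt hcard
    rw [hzero, div_zero]
    exact zero_le_one

theorem sub_one_div_mParam_le (hrank : A.rank = m) (hscc : ∀ i, ∑ j, A i j = 0)
    (hden : ∀ B : Finset (Fin k), 2 ≤ #B → 1 ≤ (#B : ℝ) - 1 + hRank A B - m)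
    {B : Finset (Fin k)} (hB : B.Nonempty) :
    ((#B : ℝ) - 1) / mParam A ≤ (#B : ℝ) - 1 + hRank A B - m := by
  rcases (Nat.succ_le_of_lt hB.card_pos).eq_or_lt with hone | htwo
  · obtain ⟨j, rfl⟩ := card_eq_one.1 hone.symm
    have hle := rank_le_rank_submatrix_notMem_singleton hscc j
    rw [rank_submatrix_notMem_eq_hRank, hrank, ← Nat.cast_le (α := ℝ)] at hle
    rw [card_singleton, Nat.cast_one, sub_self, zero_div, zero_add]
    linarith
  · have hBpos : (0 : ℝ) < (#B : ℝ) - 1 := sub_pos.2 (Nat.one_lt_cast.2 htwo)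
    have hdenpos : 0 < (#B : ℝ) - 1 + hRank A B - m := one_pos.trans_le (hden B htwo)
    have hle := div_le_mParam A htwo
    rwa [div_le_comm₀ hdenpos ((div_pos hBpos hdenpos).trans_le hle)] at hle

theorem card_filter_eq_on_latticePoints_ker_le (hrank : A.rank = m)
    (hscc : ∀ i, ∑ j, A i j = 0)
    (hden : ∀ B : Finset (Fin k), 2 ≤ #B → 1 ≤ (#B : ℝ) - 1 + hRank A B - m) {n : ℕ}
    (hn : 0 < n) (B : Finset (Fin k)) (b : Fin k → ℤ) (hB : B.Nonempty) :
    #{x ∈ latticePoints (LinearMap.ker A.mulVecLin) (Icc (1 : ℤ) n) | ∀ j ∈ B, x j = b j} ≤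
      (n : ℝ) ^ (k - m) / n * ((n : ℝ) ^ (-(1 / mParam A))) ^ (#B - 1) := by
  have hn₀ : (0 : ℝ) < n := Nat.cast_pos.2 hn
  have hne : (Icc (1 : ℤ) n).Nonempty := nonempty_Icc.2 (by omega)
  have hcount := card_filter_eq_on_latticePoints_le hne A B b
  rw [rank_submatrix_notMem_eq_hRank, Int.card_Icc, add_sub_cancel_right, Int.toNat_natCast,
    Fintype.card_fin] at hcount
  have hBk : #B ≤ k := card_finset_fin_le B
  have hmk : m ≤ k := hrank.symm.trans_le ((Matrix.rank_le_width A).trans_eq rfl)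
  calc (#{x ∈ latticePoints (LinearMap.ker A.mulVecLin) (Icc (1 : ℤ) n) |
        ∀ j ∈ B, x j = b j} : ℝ)
      ≤ (n : ℝ) ^ (k - #B - hRank A B) := by
        rw [← Nat.cast_pow]
        exact Nat.cast_le.2 (by convert hcount)
    _ = (n : ℝ) ^ ((k : ℝ) - #B - hRank A B) := by
      rw [← Real.rpow_natCast, Nat.cast_sub (hRank_le A B), Nat.cast_sub hBk]
    _ ≤ (n : ℝ) ^ ((k : ℝ) - m - 1 + -(1 / mParam A) * (#B - 1)) := by
      refine Real.rpow_le_rpow_of_exponent_le (Nat.one_le_cast.2 hn) ?_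
      have hexp := sub_one_div_mParam_le hrank hscc hden hB
      rw [neg_mul, one_div_mul_eq_div]
      linarith
    _ = (n : ℝ) ^ (k - m) / n * ((n : ℝ) ^ (-(1 / mParam A))) ^ (#B - 1) := by
      rw [Real.rpow_add hn₀, Real.rpow_sub_one hn₀.ne', Real.rpow_mul hn₀.le,
        ← Nat.cast_sub hmk, ← Nat.cast_pred hB.card_pos, Real.rpow_natCast, Real.rpow_natCast]

theorem isSpread_solutionWeight_ker (hrank : A.rank = m) (hscc : ∀ i, ∑ j, A i j = 0)
    (hden : ∀ B : Finset (Fin k), 2 ≤ #B → 1 ≤ (#B : ℝ) - 1 + hRank A B - m) {n : ℕ}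
    (hn : 0 < n) :
    IsSpread k (k.factorial * ((n : ℝ) ^ (k - m) / n)) ((n : ℝ) ^ (-(1 / mParam A)))
      (Icc (1 : ℤ) n) (solutionWeight (LinearMap.ker A.mulVecLin) (Icc (1 : ℤ) n)) := by
  have hspread := isSpread_solutionWeight (M := LinearMap.ker A.mulVecLin) (G := Icc (1 : ℤ) n)
    (D := (n : ℝ) ^ (k - m) / n) (p := (n : ℝ) ^ (-(1 / mParam A))) (by positivity)
    (by positivity) fun B b hB => by
      convert card_filter_eq_on_latticePoints_ker_le hrank hscc hden hn B b hB
  rwa [Fintype.card_fin] at hspread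

theorem exists_forall_card_independentSets_ker_le (hkm : m < k) (hrank : A.rank = m)
    (hirr : ∀ i j : Fin k, i ≠ j → ∃ x : Fin k → ℤ, A.mulVec x = 0 ∧ x i ≠ x j)
    (hscc : ∀ i, ∑ j, A i j = 0)
    (hden : ∀ B : Finset (Fin k), 2 ≤ #B → 1 ≤ (#B : ℝ) - 1 + hRank A B - m) {β : ℝ}
    (hβ : 0 < β) :
    ∃ C : ℝ, 0 < C ∧ ∃ n₀ : ℕ, ∀ n : ℕ, n₀ ≤ n → ∀ t : ℕ,
      C * (n : ℝ) ^ ((1 : ℝ) - 1 / mParam A) ≤ t →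
        #{F ∈ powersetCard t (Icc (1 : ℤ) n) | F ∈ independentSets (Icc (1 : ℤ) n)
          (solutionWeight (LinearMap.ker A.mulVecLin) (Icc (1 : ℤ) n))} ≤
            (⌊β * (n : ℝ)⌋₊).choose t := by
  have : Nonempty (Fin k) := ⟨⟨0, by omega⟩⟩
  have hone : (1 : Fin k → ℤ) ∈ LinearMap.ker A.mulVecLin := by
    rw [LinearMap.mem_ker, Matrix.mulVecLin_apply]
    funext i
    simpa [Matrix.mulVec, dotProduct] using hscc i
  obtain ⟨c, hc, n₁, hsuper⟩ :=
    exists_mul_pow_le_card_injective_latticePoints hone hirr (by positivity : 0 < β / 65)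
  rw [finrank_ker_mulVecLin, hrank, Fintype.card_fin] at hsuper
  obtain ⟨C, hC, n₂, hcount⟩ :=
    exists_card_filter_mem_independentSets_le (α := ℤ) k (K := k.factorial / c) (by positivity) hβ
  refine ⟨C, hC, max (max n₁ n₂) 1, fun n hn t ht => ?_⟩
  have hn₀ : (0 : ℝ) < n := Nat.cast_pos.2 (by omega)
  have hpn : (n : ℝ) ^ (-(1 / mParam A)) * n = (n : ℝ) ^ (1 - 1 / mParam A) := by
    rw [← Real.rpow_add_one hn₀.ne', neg_add_eq_sub]
  refine hcount n (by omega) (by rw [Int.card_Icc]; omega) (by positivity) ?_ (by positivity)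
    (isSpread_solutionWeight_ker hrank hscc hden (by omega)) (fun U hU hUcard => ?_) t (hpn ▸ ht)
  · rw [hpn]
    exact Real.one_le_rpow (Nat.one_le_cast.2 (by omega))
      (sub_nonneg.2 (one_div_mParam_le_one hden))
  · calc (k.factorial * ((n : ℝ) ^ (k - m) / n)) * n
        = k.factorial / c * (c * (n : ℝ) ^ (k - m)) := by field_simp
      _ ≤ k.factorial / c * codegree U (solutionWeight _ (Icc (1 : ℤ) n)) ∅ := by
        gcongr
        simpa [codegree_solutionWeight hU] using hsuper n (by omega) U hU hUcard

end RodlRucinski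

/-- counting solution-free subsets of `[1,n]` for integer linear systems. -/
theorem stmt2 (m k : ℕ) (hkm : m < k)
    (A : Matrix (Fin m) (Fin k) ℤ)
    (hrank : (A.map (Int.cast : ℤ → ℚ)).rank = m)
    (hirr : ∀ i j : Fin k, i ≠ j → ∃ x : Fin k → ℤ, A.mulVec x = 0 ∧ x i ≠ x j)
    (hscc : ∀ r : Fin m, ∑ j, A r j = 0)
    (hden : ∀ B : Finset (Fin k), 2 ≤ B.card →
      1 ≤ (B.card : ℝ) - 1 + (hRank A B : ℝ) - (m : ℝ))
    (β : ℝ) (hβ : 0 < β) :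
    ∃ C : ℝ, 0 < C ∧ ∃ n₀ : ℕ, ∀ n : ℕ, n₀ ≤ n → ∀ t : ℕ,
      C * (n : ℝ) ^ ((1:ℝ) - 1 / mParam A) ≤ (t : ℝ) →
      (((Finset.Icc (1:ℤ) (n:ℤ)).powerset.filter (fun F =>
          F.card = t ∧ ¬ ∃ x : Fin k → ℤ,
            (∀ j, x j ∈ F) ∧ Function.Injective x ∧ A.mulVec x = 0)).card : ℝ)
        ≤ (Nat.choose ⌊β * (n : ℝ)⌋₊ t : ℝ) := by
  have hrankℤ : A.rank = m := (rank_map_algebraMap (K := ℚ) A).symm.trans hrank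
  obtain ⟨C, hC, n₀, hcount⟩ :=
    exists_forall_card_independentSets_ker_le hkm hrankℤ hirr hscc hden hβ
  refine ⟨C, hC, n₀, fun n hn t ht => Nat.cast_le.2 ?_⟩
  refine (card_le_card fun F hF => ?_).trans (hcount n hn t ht)
  obtain ⟨hFn, hcard, hfree⟩ := mem_filter.1 hF
  rw [mem_powerset] at hFn
  refine mem_filter.2 ⟨mem_powersetCard.2 ⟨hFn, hcard⟩, ?_⟩
  refine mem_independentSets_solutionWeight hFn fun x hx hinj => hfree ⟨x, ?_⟩
  rw [mem_latticePoints] at hx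
  exact ⟨hx.1, hinj, hx.2⟩
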